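/- Fix 1 ≤ p ≤ ∞ and integers d ≥ 1 and 1 ≤ k ≤ d such that either d = k = 3, or d ≥ 3 and k = 2. Then H^p(𝕋^d) enjoys the contractive restriction property of dimension k if and only if p ∉ {2, 4}. -/

import Mathlib

open MeasureTheory
open scoped Classical ENNReal

noncomputable section

/-- The `d`-dimensional torus, modelled as `d` copies of `ℝ/ℤ`,
whose product `volume` measure is the normalized Haar measure. -/
abbrev Torus (d : ℕ) := Fin d → AddCircle (1 : ℝ)

/-- The character `z ↦ z^α` on the torus. -/
def torusChar {d : ℕ} (α : Fin d → ℤ) (x : Torus d) : ℂ :=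
  ∏ j, fourier (α j) (x j)

/-- The trigonometric polynomial with frequencies in `F` and coefficients `a`. -/
def trigPoly {d : ℕ} (F : Finset (Fin d → ℤ)) (a : (Fin d → ℤ) → ℂ) (x : Torus d) : ℂ :=
  ∑ α ∈ F, a α * torusChar α x

/-- The set `ℕ₀^d` of multi-indices with nonnegative entries. -/
def NN (d : ℕ) : Set (Fin d → ℤ) := {α | ∀ j, 0 ≤ α j}

/-- `Λ` is a coset in `ℤ^d`, i.e. a translate of a subgroup. -/
def IsCoset {d : ℕ} (Λ : Set (Fin d → ℤ)) : Prop :=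
  ∃ (x : Fin d → ℤ) (H : AddSubgroup (Fin d → ℤ)),
    Λ = (x + ·) '' (H : Set (Fin d → ℤ))

/-- `Λ` is a contractive projection set for `L^p(𝕋^d)`:
the projection onto frequencies in `Λ` is contractive on trigonometric polynomials. -/
def IsContractiveLp (d : ℕ) (p : ℝ≥0∞) (Λ : Set (Fin d → ℤ)) : Prop :=
  ∀ (F : Finset (Fin d → ℤ)) (a : (Fin d → ℤ) → ℂ),
    eLpNorm (trigPoly (F.filter (· ∈ Λ)) a) p volume ≤ eLpNorm (trigPoly F a) p volume

/-- `Γ` is a contractive projection set for `H^p(𝕋^d)`: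
the projection onto frequencies in `Γ` is contractive on analytic polynomials. -/
def IsContractiveHp (d : ℕ) (p : ℝ≥0∞) (Γ : Set (Fin d → ℤ)) : Prop :=
  ∀ F : Finset (Fin d → ℤ), ↑F ⊆ NN d → ∀ a : (Fin d → ℤ) → ℂ,
    eLpNorm (trigPoly (F.filter (· ∈ Γ)) a) p volume ≤ eLpNorm (trigPoly F a) p volume

/-- `Γ` has dimension `k`: the subgroup generated by the differences `γ - γ₀` has rank `k`. -/
def HasDim {d : ℕ} (Γ : Set (Fin d → ℤ)) (k : ℕ) : Prop :=
  ∀ γ₀ ∈ Γ, Module.finrank ℤ (Submodule.span ℤ ((· - γ₀) '' Γ)) = k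

/-- `H^p(𝕋^d)` enjoys the contractive restriction property of dimension `k`:
every `k`-dimensional contractive projection set for `H^p(𝕋^d)` is the restriction
of a coset in `ℤ^d` to `ℕ₀^d`. -/
def ContractiveRestrictionProperty (d : ℕ) (p : ℝ≥0∞) (k : ℕ) : Prop :=
  ∀ Γ : Set (Fin d → ℤ), Γ.Nonempty → Γ ⊆ NN d → HasDim Γ k → IsContractiveHp d p Γ →
    ∃ Λ : Set (Fin d → ℤ), IsCoset Λ ∧ Γ = Λ ∩ NN d

/-- The coset `Λ(Γ)` in `ℤ^d` generated by `Γ`. -/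
def cosetGen {d : ℕ} (Γ : Set (Fin d → ℤ)) : Set (Fin d → ℤ) :=
  ⋃ γ₀ ∈ Γ, (γ₀ + ·) '' (AddSubgroup.closure ((· - γ₀) '' Γ) : Set (Fin d → ℤ))

/-- The `n`-extension `E_n(Γ)`: all points of `Λ(Γ) ∩ ℕ₀^d` at distance at most `n` from `Γ`. -/
def Eext {d : ℕ} (n : ℕ) (Γ : Set (Fin d → ℤ)) : Set (Fin d → ℤ) :=
  {lam | lam ∈ cosetGen Γ ∩ NN d ∧ ∃ γ ∈ Γ, ∃ m : (Fin d → ℤ) →₀ ℤ,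
    (↑m.support : Set (Fin d → ℤ)) ⊆ Γ \ {γ} ∧
    lam = γ + ∑ α ∈ m.support, m α • (α - γ) ∧
    (∑ α ∈ m.support, max (m α) 0) ≤ (n : ℤ) ∧
    (∑ α ∈ m.support, max (-(m α)) 0) ≤ (n : ℤ)}

/-- Iterated `n`-extensions `E_n^k(Γ)`. -/
def EextIter {d : ℕ} (n : ℕ) : ℕ → Set (Fin d → ℤ) → Set (Fin d → ℤ)
  | 0, Γ => Eext n Γ
  | (k + 1), Γ => Eext n (EextIter n k Γ)

/-- The `n`-completion `E_n^∞(Γ)`. -/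
def EextInf {d : ℕ} (n : ℕ) (Γ : Set (Fin d → ℤ)) : Set (Fin d → ℤ) :=
  ⋃ k, EextIter n k Γ

def det2 (a b c : ℤ × ℤ) : ℤ := (b.1 - a.1) * (c.2 - a.2) - (b.2 - a.2) * (c.1 - a.1)

structure Conv2 (P : ℤ × ℤ → Prop) : Prop where
  conv : ∀ (N k l m : ℤ) (u v w x : ℤ × ℤ), 0 < N → 0 ≤ k → 0 ≤ l → 0 ≤ m → k + l + m = N →
    P u → P v → P w → N * x.1 = k * u.1 + l * v.1 + m * w.1 →
    N * x.2 = k * u.2 + l * v.2 + m * w.2 → P x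

def Cl2 (P G : ℤ × ℤ → Prop) : Prop :=
  ∀ a b c d e x : ℤ × ℤ, G a → G b → G c → G d → G e → P x →
    x.1 = a.1 + b.1 + c.1 - d.1 - e.1 → x.2 = a.2 + b.2 + c.2 - d.2 - e.2 → G x

theorem flip_aux {P G : ℤ × ℤ → Prop} (hP : Conv2 P) (hG : Cl2 P G) (hGP : ∀ x, G x → P x)
    (a b c d : ℤ × ℤ) (s : ℤ) (ha : G a) (hb : G b) (hc : G c) (hd : P d) (hs : 1 ≤ s)
    (h1 : d.1 = - a.1 + s * b.1 + (2 - s) * c.1) (h2 : d.2 = - a.2 + s * b.2 + (2 - s) * c.2) :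
    G d := by
  -- points e_j
  have key : ∀ j : ℕ, 2 * ((j : ℤ) + 1) ≤ s →
      G (c.1 + j * (b.1 - c.1), c.2 + j * (b.2 - c.2)) ∧
      G (c.1 + (j + 1) * (b.1 - c.1), c.2 + (j + 1) * (b.2 - c.2)) := by
    intro j
    induction j with
    | zero =>
      intro _
      constructor
      · simpa using hc
      · have e : (c.1 + (((0:ℕ):ℤ) + 1) * (b.1 - c.1), c.2 + (((0:ℕ):ℤ) + 1) * (b.2 - c.2)) = b := by
          ext <;> simp
        rw [e]; exact hb
    | succ j ih =>
      intro hj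
      push_cast at hj ⊢
      obtain ⟨i1, i2⟩ := ih (by linarith)
      refine ⟨i2, ?_⟩
      refine hG _ _ _ _ _ _ i2 i2 i2 i2 i1 ?_ (by simp; ring) (by simp; ring)
      refine hP.conv s (s - 2 * (j + 1 + 1)) (j + 1 + 1) (j + 1 + 1) c a d _ (by linarith) (by linarith)
        (by positivity) (by positivity) (by ring) (hGP _ hc) (hGP _ ha) hd ?_ ?_
      · rw [h1]; simp only; ring
      · rw [h2]; simp only; ring
  rcases Int.even_or_odd' s with ⟨m, hm | hm⟩
  · obtain ⟨j, rfl⟩ : ∃ j : ℕ, m = j + 1 := ⟨(m - 1).toNat, by omega⟩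
    obtain ⟨i1, i2⟩ := key j (by linarith)
    refine hG _ _ _ _ _ _ i2 i2 ha ha ha hd ?_ ?_
    · rw [h1, hm]; simp only; ring
    · rw [h2, hm]; simp only; ring
  · by_cases h0 : m = 0
    · subst h0
      refine hG _ _ _ _ _ _ hc hb ha ha ha hd ?_ ?_
      · rw [h1, hm]; ring
      · rw [h2, hm]; ring
    · obtain ⟨j, rfl⟩ : ∃ j : ℕ, m = j + 1 := ⟨(m - 1).toNat, by omega⟩
      obtain ⟨i1, i2⟩ := key j (by linarith)
      refine hG _ _ _ _ _ _ i2 i2 i2 i1 ha hd ?_ ?_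
      · rw [h1, hm]; simp only; ring
      · rw [h2, hm]; simp only; ring

def Good2 (P G : ℤ × ℤ → Prop) (D M : ℤ) : Prop :=
  ∀ a b c l : ℤ × ℤ, G a → G b → G c → det2 a b c = D → P l →
    |det2 l b c| + |det2 a l c| + |det2 a b l| < M →
    (G l ∨ (D ∣ det2 l b c ∧ D ∣ det2 a l c ∧ D ∣ det2 a b l)) →
    (G l ∧ (D ∣ det2 l b c ∧ D ∣ det2 a l c ∧ D ∣ det2 a b l))

theorem det2_sum (a b c l : ℤ × ℤ) : det2 l b c + det2 a l c + det2 a b l = det2 a b c := by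
  simp only [det2]; ring

theorem det2_c1 (a b c l : ℤ × ℤ) : det2 a b c * l.1 =
    det2 l b c * a.1 + det2 a l c * b.1 + det2 a b l * c.1 := by
  simp only [det2]; ring

theorem det2_c2 (a b c l : ℤ × ℤ) : det2 a b c * l.2 =
    det2 l b c * a.2 + det2 a l c * b.2 + det2 a b l * c.2 := by
  simp only [det2]; ring

theorem flip_full {P G : ℤ × ℤ → Prop} (hP : Conv2 P) (hG : Cl2 P G) (hGP : ∀ x, G x → P x)
    (a b c d : ℤ × ℤ) (s : ℤ) (ha : G a) (hb : G b) (hc : G c) (hd : P d)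
    (h1 : d.1 = - a.1 + s * b.1 + (2 - s) * c.1) (h2 : d.2 = - a.2 + s * b.2 + (2 - s) * c.2) :
    G d := by
  by_cases hs : 1 ≤ s
  · exact flip_aux hP hG hGP a b c d s ha hb hc hd hs h1 h2
  · exact flip_aux hP hG hGP a c b d (2 - s) ha hc hb hd (by linarith) (by linarith) (by linarith)

theorem one_neg {P G : ℤ × ℤ → Prop} (hP : Conv2 P) (hG : Cl2 P G) (hGP : ∀ x, G x → P x)
    (D : ℤ) (hD : 0 < D) (a b c l : ℤ × ℤ) (ha : G a) (hb : G b) (hc : G c)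
    (hdet : det2 a b c = D) (hl : P l)
    (IH : Good2 P G D (|det2 l b c| + |det2 a l c| + |det2 a b l|))
    (hx : det2 l b c ≤ - D) (hy : 0 ≤ det2 a l c) (hz : 0 ≤ det2 a b l)
    (h : G l ∨ (D ∣ det2 l b c ∧ D ∣ det2 a l c ∧ D ∣ det2 a b l)) :
    (G l ∧ (D ∣ det2 l b c ∧ D ∣ det2 a l c ∧ D ∣ det2 a b l)) := by
  obtain ⟨Y, hY⟩ : ∃ Y, Y = - det2 l b c := ⟨_, rfl⟩
  obtain ⟨X, hX⟩ : ∃ X, X = det2 a l c := ⟨_, rfl⟩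
  have hx' : det2 l b c = - Y := by linarith
  have hz' : det2 a b l = D + Y - X := by
    have := det2_sum a b c l
    linarith
  have c1 := det2_c1 a b c l
  have c2 := det2_c2 a b c l
  rw [hdet, hx', ← hX, hz'] at c1 c2
  rw [hx', ← hX, hz'] at IH h ⊢
  rw [hx'] at hx
  rw [← hX] at hy
  rw [hz'] at hz
  have hYD : D ≤ Y := by linarith
  have hYp : 0 < Y := by linarith
  have habs : |(-Y)| + |X| + |D + Y - X| = 2 * Y + D := by
    rw [abs_neg, abs_of_pos hYp, abs_of_nonneg hy, abs_of_nonneg hz]; ring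
  rw [habs] at IH
  obtain ⟨u, hu⟩ : ∃ u, u = (X + Y - D) / Y := ⟨_, rfl⟩
  have hu1 : u * Y ≤ X + Y - D := by rw [hu]; exact Int.ediv_mul_le _ hYp.ne'
  have hu2 : X - D < u * Y := by
    have := Int.lt_ediv_add_one_mul_self (X + Y - D) hYp
    rw [← hu] at this; linarith
  by_cases hc1 : X ≤ u * Y
  · -- flip
    obtain ⟨d, hd⟩ : ∃ d : ℤ × ℤ, d = (- a.1 + u * b.1 + (2 - u) * c.1, - a.2 + u * b.2 + (2 - u) * c.2) :=
      ⟨_, rfl⟩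
    have hd1 : d.1 = - a.1 + u * b.1 + (2 - u) * c.1 := by rw [hd]
    have hd2 : d.2 = - a.2 + u * b.2 + (2 - u) * c.2 := by rw [hd]
    have hPd : P d := by
      refine hP.conv Y D (u * Y - X) (Y - D - u * Y + X) l b c d hYp hD.le (by linarith) (by linarith)
        (by ring) hl (hGP _ hb) (hGP _ hc) ?_ ?_
      · rw [c1, hd1]; ring
      · rw [c2, hd2]; ring
    have hGd := flip_full hP hG hGP a b c d u ha hb hc hPd hd1 hd2
    have e0 : det2 d c b = D := by
      rw [← hdet]; simp only [det2, hd1, hd2]; ring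
    have e1 : det2 l c b = Y := by rw [hY]; simp only [det2]; ring
    have e2 : det2 d l b = Y * (u - 1) - X + D := by
      have : det2 d l b = - det2 l b c * (u-1) - det2 a l c + det2 a b c := by
        simp only [det2, hd1, hd2]; ring
      rw [this, hx', ← hX, hdet]; ring
    have e3 : det2 d c l = X - u * Y := by
      have := det2_sum d c b l
      rw [e0, e1, e2] at this; linarith
    have r := IH d c b l hGd hc hb e0 hl
    rw [e1, e2, e3] at r
    have hab : |Y| + |Y * (u - 1) - X + D| + |X - u * Y| < 2 * Y + D := by
      rw [abs_of_pos hYp, abs_of_nonpos (by linarith : Y * (u - 1) - X + D ≤ 0),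
        abs_of_nonpos (by linarith : X - u * Y ≤ 0)]; linarith
    have r2 := r hab (by
      rcases h with h | ⟨h1, h2, h3⟩
      · exact Or.inl h
      · right
        have hY' : D ∣ Y := (dvd_neg).1 h1
        refine ⟨hY', ?_, ?_⟩
        · exact dvd_add (dvd_sub (Dvd.dvd.mul_right hY' _) h2) (dvd_refl _)
        · exact dvd_sub h2 (Dvd.dvd.mul_left hY' _))
    obtain ⟨q1, q2, q3, q4⟩ := r2
    have hX' : D ∣ X := by
      have := dvd_add q4 (Dvd.dvd.mul_left q2 u)
      simpa using this
    exact ⟨q1, (dvd_neg).2 q2, hX', dvd_sub (dvd_add (dvd_refl _) q2) hX'⟩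
  · push Not at hc1
    have hu01 : u = 0 ∨ u = 1 := by
      have h2 : u < 2 := by
        by_contra hh
        push Not at hh
        nlinarith
      have h3 : -1 < u := by
        by_contra hh
        push Not at hh
        nlinarith
      omega
    obtain ⟨e, he⟩ : ∃ e : ℤ × ℤ, e = (c.1 + u * (b.1 - c.1), c.2 + u * (b.2 - c.2)) := ⟨_, rfl⟩
    have he1 : e.1 = c.1 + u * (b.1 - c.1) := by rw [he]
    have he2 : e.2 = c.2 + u * (b.2 - c.2) := by rw [he]
    have hGe : G e := by
      rcases hu01 with rfl | rfl
      · have : e = c := by rw [he]; ext <;> simp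
        rw [this]; exact hc
      · have : e = b := by rw [he]; ext <;> simp
        rw [this]; exact hb
    obtain ⟨m, hm⟩ : ∃ m : ℤ × ℤ, m = (l.1 + a.1 - e.1, l.2 + a.2 - e.2) := ⟨_, rfl⟩
    have hm1 : m.1 = l.1 + a.1 - e.1 := by rw [hm]
    have hm2 : m.2 = l.2 + a.2 - e.2 := by rw [hm]
    have hPm : P m := by
      refine hP.conv Y (Y - D) (X - u * Y) (D - X + u * Y) l b c m hYp (by linarith) (by linarith) (by linarith)
        (by ring) hl (hGP _ hb) (hGP _ hc) ?_ ?_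
      · rw [hm1, he1]; linear_combination c1
      · rw [hm2, he2]; linear_combination c2
    have e1 : det2 m b c = D - Y := by
      have : det2 m b c = det2 l b c + det2 a b c := by
        simp only [det2, hm1, hm2, he1, he2]; ring
      rw [this, hx', hdet]; ring
    have e2 : det2 a m c = X - u * D := by
      have : det2 a m c = det2 a l c - u * det2 a b c := by
        simp only [det2, hm1, hm2, he1, he2]; ring
      rw [this, ← hX, hdet]
    have e3 : det2 a b m = Y - X + u * D := by
      have := det2_sum a b c m
      rw [e1, e2, hdet] at this; linarith
    have r := IH a b c m ha hb hc hdet hPm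
    rw [e1, e2, e3] at r
    have hab : |D - Y| + |X - u * D| + |Y - X + u * D| < 2 * Y + D := by
      have h1 : 0 ≤ X - u * D := by rcases hu01 with rfl | rfl <;> linarith
      have h2 : 0 ≤ Y - X + u * D := by rcases hu01 with rfl | rfl <;> linarith
      rw [abs_of_nonpos (by linarith : D - Y ≤ 0), abs_of_nonneg h1, abs_of_nonneg h2]; linarith
    have r2 := r hab (by
      rcases h with h | ⟨h1, h2, h3⟩
      · exact Or.inl (hG _ _ _ _ _ _ h ha ha ha hGe hPm (by linarith) (by linarith))
      · right
        have hY' : D ∣ Y := (dvd_neg).1 h1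
        exact ⟨dvd_sub (dvd_refl _) hY', dvd_sub h2 (Dvd.intro_left _ rfl),
          dvd_add (dvd_sub hY' h2) (Dvd.intro_left _ rfl)⟩)
    obtain ⟨q1, q2, q3, q4⟩ := r2
    have hX' : D ∣ X := by
      have := dvd_add q3 (Dvd.intro_left u rfl : D ∣ u * D)
      simpa using this
    have hY' : D ∣ Y := by
      have := dvd_sub (dvd_refl D) q2
      simpa using this
    exact ⟨hG _ _ _ _ _ _ q1 hGe hGe hGe ha hl (by linarith) (by linarith), (dvd_neg).2 hY', hX',
      dvd_sub (dvd_add (dvd_refl _) hY') hX'⟩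

theorem two_neg_aux {P G : ℤ × ℤ → Prop} (hP : Conv2 P) (hG : Cl2 P G) (hGP : ∀ x, G x → P x)
    (D : ℤ) (hD : 0 < D) (a b c l : ℤ × ℤ) (ha : G a) (hb : G b) (hc : G c)
    (hl : P l) (y z : ℤ) (hy : D ≤ y) (hz : D ≤ z) (hyz : y ≤ z)
    (c1 : D * l.1 = (D + y + z) * a.1 - y * b.1 - z * c.1)
    (c2 : D * l.2 = (D + y + z) * a.2 - y * b.2 - z * c.2) :
    (y + D ≤ z → P (2 * a.1 - c.1, 2 * a.2 - c.2)) ∧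
    (z < y + D → P (l.1 + b.1 + c.1 - 2 * a.1, l.2 + b.2 + c.2 - 2 * a.2)) := by
  constructor
  · intro h
    refine hP.conv z D y (z - D - y) l b a _ (by linarith) hD.le (by linarith) (by linarith)
        (by ring) hl (hGP _ hb) (hGP _ ha) ?_ ?_
    · rw [c1]; ring
    · rw [c2]; ring
  · intro h
    refine hP.conv z (z - D) (D - z + y) (z - y) l a b _ (by linarith) (by linarith) (by linarith)
        (by linarith) (by ring) hl (hGP _ ha) (hGP _ hb) ?_ ?_
    · simp only; linear_combination c1
    · simp only; linear_combination c2

theorem two_neg {P G : ℤ × ℤ → Prop} (hP : Conv2 P) (hG : Cl2 P G) (hGP : ∀ x, G x → P x)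
    (D : ℤ) (hD : 0 < D) (a b c l : ℤ × ℤ) (ha : G a) (hb : G b) (hc : G c)
    (hdet : det2 a b c = D) (hl : P l)
    (IH : Good2 P G D (|det2 l b c| + |det2 a l c| + |det2 a b l|))
    (hy : det2 a l c ≤ - D) (hz : det2 a b l ≤ - D)
    (h : G l ∨ (D ∣ det2 l b c ∧ D ∣ det2 a l c ∧ D ∣ det2 a b l)) :
    (G l ∧ (D ∣ det2 l b c ∧ D ∣ det2 a l c ∧ D ∣ det2 a b l)) := by
  obtain ⟨y, hY⟩ : ∃ Y, Y = - det2 a l c := ⟨_, rfl⟩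
  obtain ⟨z, hZ⟩ : ∃ X, X = - det2 a b l := ⟨_, rfl⟩
  have hy' : det2 a l c = - y := by linarith
  have hz' : det2 a b l = - z := by linarith
  have hx' : det2 l b c = D + y + z := by
    have := det2_sum a b c l
    linarith
  have c1 := det2_c1 a b c l
  have c2 := det2_c2 a b c l
  rw [hdet, hx', hy', hz'] at c1 c2
  rw [hx', hy', hz'] at IH h ⊢
  rw [hy'] at hy
  rw [hz'] at hz
  have habs : |D + y + z| + |-y| + |-z| = 2 * y + 2 * z + D := by
    rw [abs_neg, abs_neg, abs_of_pos (by linarith : 0 < y), abs_of_pos (by linarith : 0 < z),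
      abs_of_pos (by linarith)]; ring
  rw [habs] at IH
  by_cases k1 : y + D ≤ z
  · have hPd := (two_neg_aux hP hG hGP D hD a b c l ha hb hc hl y z (by linarith) (by linarith)
      (by linarith) (by linarith) (by linarith)).1 k1
    obtain ⟨d, hd⟩ : ∃ d : ℤ × ℤ, d = (2 * a.1 - c.1, 2 * a.2 - c.2) := ⟨_, rfl⟩
    have hd1 : d.1 = 2 * a.1 - c.1 := by rw [hd]
    have hd2 : d.2 = 2 * a.2 - c.2 := by rw [hd]
    rw [← hd] at hPd
    have hGd : G d := hG _ _ _ _ _ _ ha ha ha ha hc hPd (by linarith) (by linarith)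
    have e0 : det2 b a d = D := by rw [← hdet]; simp only [det2, hd1, hd2]; ring
    have e3 : det2 b a l = z := by rw [hZ]; simp only [det2]; ring
    have e1 : det2 l a d = - y := by
      rw [← hy']; simp only [det2, hd1, hd2]; ring
    have e2 : det2 b l d = D + y - z := by
      have := det2_sum b a d l
      linarith
    have r := IH b a d l hb ha hGd e0 hl
    rw [e1, e2, e3] at r
    have hab : |-y| + |D + y - z| + |z| < 2 * y + 2 * z + D := by
      rw [abs_neg, abs_of_pos (by linarith : 0 < y), abs_of_pos (by linarith : 0 < z),
        abs_of_nonpos (by linarith : D + y - z ≤ 0)]; linarith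
    obtain ⟨q1, q2, q3, q4⟩ := r hab (by
      rcases h with h | ⟨h1, h2, h3⟩
      · exact Or.inl h
      · have hy2 : D ∣ y := (dvd_neg).1 h2
        have hz2 : D ∣ z := (dvd_neg).1 h3
        exact Or.inr ⟨h2, dvd_sub (dvd_add (dvd_refl _) hy2) hz2, hz2⟩)
    have hy2 : D ∣ y := (dvd_neg).1 q2
    exact ⟨q1, dvd_add (dvd_add (dvd_refl _) hy2) q4, q2, (dvd_neg).2 q4⟩
  by_cases k2 : z + D ≤ y
  · have hPd := (two_neg_aux hP hG hGP D hD a c b l ha hc hb hl z y (by linarith) (by linarith)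
      (by linarith) (by linarith) (by linarith)).1 k2
    obtain ⟨d, hd⟩ : ∃ d : ℤ × ℤ, d = (2 * a.1 - b.1, 2 * a.2 - b.2) := ⟨_, rfl⟩
    have hd1 : d.1 = 2 * a.1 - b.1 := by rw [hd]
    have hd2 : d.2 = 2 * a.2 - b.2 := by rw [hd]
    rw [← hd] at hPd
    have hGd : G d := hG _ _ _ _ _ _ ha ha ha ha hb hPd (by linarith) (by linarith)
    have e0 : det2 c d a = D := by rw [← hdet]; simp only [det2, hd1, hd2]; ring
    have e3 : det2 c l a = y := by rw [hY]; simp only [det2]; ring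
    have e1 : det2 l d a = - z := by
      rw [← hz']; simp only [det2, hd1, hd2]; ring
    have e2 : det2 c d l = D + z - y := by
      have := det2_sum c d a l
      linarith
    have r := IH c d a l hc hGd ha e0 hl
    rw [e1, e2, e3] at r
    have hab : |-z| + |y| + |D + z - y| < 2 * y + 2 * z + D := by
      rw [abs_neg, abs_of_pos (by linarith : 0 < y), abs_of_pos (by linarith : 0 < z),
        abs_of_nonpos (by linarith : D + z - y ≤ 0)]; linarith
    obtain ⟨q1, q2, q3, q4⟩ := r hab (by
      rcases h with h | ⟨h1, h2, h3⟩
      · exact Or.inl h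
      · have hy2 : D ∣ y := (dvd_neg).1 h2
        have hz2 : D ∣ z := (dvd_neg).1 h3
        exact Or.inr ⟨h3, hy2, dvd_sub (dvd_add (dvd_refl _) hz2) hy2⟩)
    have hz2 : D ∣ z := (dvd_neg).1 q2
    exact ⟨q1, dvd_add (dvd_add (dvd_refl _) q3) hz2, (dvd_neg).2 q3, q2⟩
  · push Not at k1 k2
    obtain ⟨m, hm⟩ : ∃ m : ℤ × ℤ, m = (l.1 + b.1 + c.1 - 2 * a.1, l.2 + b.2 + c.2 - 2 * a.2) :=
      ⟨_, rfl⟩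
    have hm1 : m.1 = l.1 + b.1 + c.1 - 2 * a.1 := by rw [hm]
    have hm2 : m.2 = l.2 + b.2 + c.2 - 2 * a.2 := by rw [hm]
    have hPm : P m := by
      rcases le_total y z with hyz | hyz
      · have := (two_neg_aux hP hG hGP D hD a b c l ha hb hc hl y z (by linarith) (by linarith)
          (by linarith) (by linarith) (by linarith)).2 k1
        rwa [← hm] at this
      · have := (two_neg_aux hP hG hGP D hD a c b l ha hc hb hl z y (by linarith) (by linarith)
          (by linarith) (by linarith) (by linarith)).2 k2
        have e : m = (l.1 + c.1 + b.1 - 2 * a.1, l.2 + c.2 + b.2 - 2 * a.2) := by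
          rw [hm]; ext <;> simp only <;> ring
        rwa [← e] at this
    have e2 : det2 a m c = D - y := by
      have : det2 a m c = det2 a l c + det2 a b c := by simp only [det2, hm1, hm2]; ring
      linarith
    have e3 : det2 a b m = D - z := by
      have : det2 a b m = det2 a b l + det2 a b c := by simp only [det2, hm1, hm2]; ring
      linarith
    have e1 : det2 m b c = y + z - D := by
      have := det2_sum a b c m
      linarith
    have r := IH a b c m ha hb hc hdet hPm
    rw [e1, e2, e3] at r
    have hab : |y + z - D| + |D - y| + |D - z| < 2 * y + 2 * z + D := by
      rw [abs_of_nonneg (by linarith : 0 ≤ y + z - D), abs_of_nonpos (by linarith : D - y ≤ 0),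
        abs_of_nonpos (by linarith : D - z ≤ 0)]; linarith
    obtain ⟨q1, q2, q3, q4⟩ := r hab (by
      rcases h with h | ⟨h1, h2, h3⟩
      · exact Or.inl (hG _ _ _ _ _ _ h hb hc ha ha hPm (by linarith) (by linarith))
      · have hy2 : D ∣ y := (dvd_neg).1 h2
        have hz2 : D ∣ z := (dvd_neg).1 h3
        exact Or.inr ⟨dvd_sub (dvd_add hy2 hz2) (dvd_refl _), dvd_sub (dvd_refl _) hy2,
          dvd_sub (dvd_refl _) hz2⟩)
    have hy2 : D ∣ y := by simpa using dvd_sub (dvd_refl D) q3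
    have hz2 : D ∣ z := by simpa using dvd_sub (dvd_refl D) q4
    exact ⟨hG _ _ _ _ _ _ q1 ha ha hb hc hl (by linarith) (by linarith),
      dvd_add (dvd_add (dvd_refl _) hy2) hz2, (dvd_neg).2 hy2, (dvd_neg).2 hz2⟩

theorem dvd_of_eq_aux {D x y : ℤ} (h : D ∣ x) (e : y = x) : D ∣ y := e ▸ h

theorem det2_rot (a b c : ℤ × ℤ) : det2 b c a = det2 a b c := by
  simp only [det2]; ring

set_option maxHeartbeats 1000000 in
theorem good_all {P G : ℤ × ℤ → Prop} (hP : Conv2 P) (hG : Cl2 P G) (hGP : ∀ x, G x → P x)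
    (D : ℤ) (hD : 0 < D)
    (hmin : ∀ a b c, G a → G b → G c → det2 a b c ≠ 0 → D ≤ |det2 a b c|) :
    ∀ n : ℕ, Good2 P G D n := by
  intro n
  induction n with
  | zero =>
    intro a b c l _ _ _ _ _ h
    have h1 := abs_nonneg (det2 l b c)
    have h2 := abs_nonneg (det2 a l c)
    have h3 := abs_nonneg (det2 a b l)
    push_cast at h
    linarith
  | succ n ih =>
    intro a b c l ha hb hc hdet hl hsum h
    have IH : ∀ M : ℤ, M = |det2 l b c| + |det2 a l c| + |det2 a b l| → Good2 P G D M := by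
      intro M hM a' b' c' l' ha' hb' hc' hd' hl' hs' h'
      refine ih a' b' c' l' ha' hb' hc' hd' hl' ?_ h'
      push_cast at hsum
      omega
    have tri : ∀ x : ℤ, (x ≠ 0 → D ≤ |x|) → x = 0 ∨ D ≤ x ∨ x ≤ -D := by
      intro x hx
      by_cases h0 : x = 0
      · exact Or.inl h0
      · right
        have := hx h0
        rcases abs_cases x with ⟨e, _⟩ | ⟨e, _⟩
        · left; linarith
        · right; linarith
    have hco : (det2 l b c ≠ 0 → D ≤ |det2 l b c|) ∧ (det2 a l c ≠ 0 → D ≤ |det2 a l c|) ∧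
        (det2 a b l ≠ 0 → D ≤ |det2 a b l|) := by
      rcases h with h | ⟨h1, h2, h3⟩
      · exact ⟨hmin _ _ _ h hb hc, hmin _ _ _ ha h hc, hmin _ _ _ ha hb h⟩
      · exact ⟨fun k => Int.le_of_dvd (abs_pos.2 k) ((dvd_abs _ _).2 h1),
          fun k => Int.le_of_dvd (abs_pos.2 k) ((dvd_abs _ _).2 h2),
          fun k => Int.le_of_dvd (abs_pos.2 k) ((dvd_abs _ _).2 h3)⟩
    have hx := tri _ hco.1
    have hy := tri _ hco.2.1
    have hz := tri _ hco.2.2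
    have hs := det2_sum a b c l
    rw [hdet] at hs
    have r1 : det2 l c a = det2 a l c := det2_rot a l c
    have r2 : det2 b l a = det2 a b l := det2_rot a b l
    have r3 : det2 b c l = det2 l b c := det2_rot l b c
    have s1 : det2 l a b = det2 a b l := by rw [← r2]; exact (det2_rot b l a)
    have s2 : det2 c l b = det2 l b c := by rw [← r3]; exact (det2_rot b c l)
    have s3 : det2 c a l = det2 a l c := by rw [← r1]; exact (det2_rot l c a)
    have d1 : det2 b c a = D := by rw [det2_rot, hdet]
    have d2 : det2 c a b = D := by rw [det2_rot, d1]
    by_cases nx : det2 l b c ≤ -D <;> by_cases ny : det2 a l c ≤ -D <;>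
      by_cases nz : det2 a b l ≤ -D
    · exfalso; linarith
    · -- x, y negative; apex c
      have := two_neg hP hG hGP D hD c a b l hc ha hb d2 hl (by rw [s1, s2, s3]; exact IH _ (by ring))
        (by rw [s2]; exact nx) (by rw [s3]; exact ny) (by rw [s1, s2, s3]; exact h.imp id (fun ⟨h1, h2, h3⟩ => ⟨h3, h1, h2⟩))
      rw [s1, s2, s3] at this
      exact ⟨this.1, this.2.2.1, this.2.2.2, this.2.1⟩
    · have := two_neg hP hG hGP D hD b c a l hb hc ha d1 hl (by rw [r1, r2, r3]; exact IH _ (by ring))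
        (by rw [r2]; exact nz) (by rw [r3]; exact nx) (by rw [r1, r2, r3]; exact h.imp id (fun ⟨h1, h2, h3⟩ => ⟨h2, h3, h1⟩))
      rw [r1, r2, r3] at this
      exact ⟨this.1, this.2.2.2, this.2.1, this.2.2.1⟩
    · exact one_neg hP hG hGP D hD a b c l ha hb hc hdet hl (IH _ rfl) nx (by omega) (by omega) h
    · exact two_neg hP hG hGP D hD a b c l ha hb hc hdet hl (IH _ rfl) ny nz h
    · have := one_neg hP hG hGP D hD b c a l hb hc ha d1 hl (by rw [r1, r2, r3]; exact IH _ (by ring))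
        (by rw [r1]; exact ny) (by rw [r2]; omega) (by rw [r3]; omega) (by rw [r1, r2, r3]; exact h.imp id (fun ⟨h1, h2, h3⟩ => ⟨h2, h3, h1⟩))
      rw [r1, r2, r3] at this
      exact ⟨this.1, this.2.2.2, this.2.1, this.2.2.1⟩
    · have := one_neg hP hG hGP D hD c a b l hc ha hb d2 hl (by rw [s1, s2, s3]; exact IH _ (by ring))
        (by rw [s1]; exact nz) (by rw [s2]; omega) (by rw [s3]; omega) (by rw [s1, s2, s3]; exact h.imp id (fun ⟨h1, h2, h3⟩ => ⟨h3, h1, h2⟩))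
      rw [s1, s2, s3] at this
      exact ⟨this.1, this.2.2.1, this.2.2.2, this.2.1⟩
    · have c1 := det2_c1 a b c l
      have c2 := det2_c2 a b c l
      rw [hdet] at c1 c2
      have h3 : (det2 l b c = D ∧ det2 a l c = 0 ∧ det2 a b l = 0) ∨
          (det2 l b c = 0 ∧ det2 a l c = D ∧ det2 a b l = 0) ∨
          (det2 l b c = 0 ∧ det2 a l c = 0 ∧ det2 a b l = D) := by omega
      have fin : ∀ q : ℤ × ℤ, D * l.1 = D * q.1 → D * l.2 = D * q.2 → l = q := by
        intro q h1 h2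
        exact Prod.ext (mul_left_cancel₀ hD.ne' h1) (mul_left_cancel₀ hD.ne' h2)
      rcases h3 with ⟨e1, e2, e3⟩ | ⟨e1, e2, e3⟩ | ⟨e1, e2, e3⟩ <;> rw [e1, e2, e3] at c1 c2 ⊢
      · have := fin a (by linarith) (by linarith)
        exact ⟨this ▸ ha, by simp⟩
      · have := fin b (by linarith) (by linarith)
        exact ⟨this ▸ hb, by simp⟩
      · have := fin c (by linarith) (by linarith)
        exact ⟨this ▸ hc, by simp⟩

/-- Final planar statement. -/
theorem planar {P G : ℤ × ℤ → Prop} (hP : Conv2 P) (hG : Cl2 P G) (hGP : ∀ x, G x → P x)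
    (g0 : ℤ × ℤ) (hg0 : G g0)
    (hgen : ∀ K : AddSubgroup (ℤ × ℤ), (∀ x, G x → x - g0 ∈ K) → K = ⊤) :
    ∀ x, P x → G x := by
  -- a nondegenerate triangle exists
  have hex : ∃ n : ℕ, ∃ a b c, G a ∧ G b ∧ G c ∧ det2 a b c ≠ 0 ∧ (det2 a b c).natAbs = n := by
    by_contra hno
    have hno : ∀ a b c, G a → G b → G c → det2 a b c = 0 := by
      intro a b c ha hb hc
      by_contra hne
      exact hno ⟨_, a, b, c, ha, hb, hc, hne, rfl⟩
    by_cases hall : ∀ x, G x → x = g0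
    · have := hgen ⊥ (fun x hx => by rw [hall x hx]; simp)
      exact absurd this bot_ne_top
    · push Not at hall
      obtain ⟨u, hu, hne⟩ := hall
      let K : AddSubgroup (ℤ × ℤ) :=
        { carrier := {v | (u.1 - g0.1) * v.2 - (u.2 - g0.2) * v.1 = 0}
          zero_mem' := by simp
          add_mem' := by
            intro v w hv hw
            simp only [Set.mem_ofPred_eq, Prod.fst_add, Prod.snd_add] at *
            linarith
          neg_mem' := by
            intro v hv
            simp only [Set.mem_ofPred_eq, Prod.fst_neg, Prod.snd_neg] at *
            linarith }
      have hK := hgen K (fun x hx => by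
        have := hno g0 u x hg0 hu hx
        simp only [det2] at this
        exact this)
      have h1 : ((1, 0) : ℤ × ℤ) ∈ K := by rw [hK]; trivial
      have h2 : ((0, 1) : ℤ × ℤ) ∈ K := by rw [hK]; trivial
      have h1' : (u.1 - g0.1) * 0 - (u.2 - g0.2) * 1 = 0 := h1
      have h2' : (u.1 - g0.1) * 1 - (u.2 - g0.2) * 0 = 0 := h2
      exact hne (Prod.ext (by linarith) (by linarith))
  classical
  obtain ⟨a0, b0, c0, ha0, hb0, hc0, hne0, heq0⟩ := Nat.find_spec hex
  obtain ⟨D, hDd⟩ : ∃ D : ℤ, D = (Nat.find hex : ℤ) := ⟨_, rfl⟩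
  have hmin : ∀ a b c, G a → G b → G c → det2 a b c ≠ 0 → D ≤ |det2 a b c| := by
    intro a b c ha hb hc hne
    have := Nat.find_min' hex ⟨a, b, c, ha, hb, hc, hne, rfl⟩
    rw [hDd, Int.abs_eq_natAbs]
    exact_mod_cast this
  obtain ⟨a, b, c, ha, hb, hc, hdet⟩ : ∃ a b c, G a ∧ G b ∧ G c ∧ det2 a b c = D := by
    have h1 : |det2 a0 b0 c0| = D := by rw [Int.abs_eq_natAbs, heq0, hDd]
    rcases abs_cases (det2 a0 b0 c0) with ⟨e, _⟩ | ⟨e, _⟩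
    · exact ⟨a0, b0, c0, ha0, hb0, hc0, by rw [← h1, e]⟩
    · refine ⟨a0, c0, b0, ha0, hc0, hb0, ?_⟩
      rw [← h1, e]; simp only [det2]; ring
  have hD : 0 < D := by
    have h1 : |det2 a0 b0 c0| = D := by rw [Int.abs_eq_natAbs, heq0, hDd]
    rw [← h1]; exact abs_pos.2 hne0
  have good := good_all hP hG hGP D hD hmin
  have main : ∀ l, P l → (G l ∨ (D ∣ det2 l b c ∧ D ∣ det2 a l c ∧ D ∣ det2 a b l)) →
      (G l ∧ (D ∣ det2 l b c ∧ D ∣ det2 a l c ∧ D ∣ det2 a b l)) := by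
    intro l hl
    refine good ((|det2 l b c| + |det2 a l c| + |det2 a b l|).toNat + 1) a b c l ha hb hc hdet hl ?_
    push_cast
    rw [Int.toNat_of_nonneg (by positivity)]
    linarith
  let K : AddSubgroup (ℤ × ℤ) :=
    { carrier := {v | D ∣ v.2 * (c.1 - b.1) - v.1 * (c.2 - b.2) ∧
          D ∣ v.1 * (c.2 - a.2) - v.2 * (c.1 - a.1) ∧ D ∣ (b.1 - a.1) * v.2 - (b.2 - a.2) * v.1}
      zero_mem' := by simp
      add_mem' := by
        rintro v w ⟨hv1, hv2, hv3⟩ ⟨hw1, hw2, hw3⟩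
        simp only [Set.mem_ofPred_eq, Prod.fst_add, Prod.snd_add]
        refine ⟨?_, ?_, ?_⟩
        · exact dvd_of_eq_aux (dvd_add hv1 hw1) (by ring)
        · exact dvd_of_eq_aux (dvd_add hv2 hw2) (by ring)
        · exact dvd_of_eq_aux (dvd_add hv3 hw3) (by ring)
      neg_mem' := by
        rintro v ⟨hv1, hv2, hv3⟩
        simp only [Set.mem_ofPred_eq, Prod.fst_neg, Prod.snd_neg]
        refine ⟨?_, ?_, ?_⟩
        · exact dvd_of_eq_aux ((dvd_neg).2 hv1) (by ring)
        · exact dvd_of_eq_aux ((dvd_neg).2 hv2) (by ring)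
        · exact dvd_of_eq_aux ((dvd_neg).2 hv3) (by ring) }
  have hK : K = ⊤ := hgen K (fun x hx => by
    obtain ⟨_, x1, x2, x3⟩ := main x (hGP x hx) (Or.inl hx)
    obtain ⟨_, y1, y2, y3⟩ := main g0 (hGP g0 hg0) (Or.inl hg0)
    refine ⟨?_, ?_, ?_⟩
    · exact dvd_of_eq_aux (dvd_sub x1 y1) (by simp only [det2, Prod.fst_sub, Prod.snd_sub]; ring)
    · exact dvd_of_eq_aux (dvd_sub x2 y2) (by simp only [det2, Prod.fst_sub, Prod.snd_sub]; ring)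
    · exact dvd_of_eq_aux (dvd_sub x3 y3) (by simp only [det2, Prod.fst_sub, Prod.snd_sub]; ring))
  intro l hl
  have hla : l - a ∈ K := by rw [hK]; trivial
  obtain ⟨k1, k2, k3⟩ := hla
  refine (main l hl (Or.inr ⟨?_, ?_, ?_⟩)).1
  · have e : det2 l b c = ((l - a).2 * (c.1 - b.1) - (l - a).1 * (c.2 - b.2)) + D := by
      rw [← hdet]; simp only [det2, Prod.fst_sub, Prod.snd_sub]; ring
    rw [e]; exact dvd_add k1 (dvd_refl _)
  · exact dvd_of_eq_aux k2 (by simp only [det2, Prod.fst_sub, Prod.snd_sub])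
  · exact dvd_of_eq_aux k3 (by simp only [det2, Prod.fst_sub, Prod.snd_sub])

def Closed32 {d : ℕ} (Γ : Set (Fin d → ℤ)) : Prop :=
  ∀ a b c u v : Fin d → ℤ, a ∈ Γ → b ∈ Γ → c ∈ Γ → u ∈ Γ → v ∈ Γ →
    a + b + c - u - v ∈ NN d → a + b + c - u - v ∈ Γ

theorem coset_of_closed_dim2 {d : ℕ} (Γ : Set (Fin d → ℤ)) (hne : Γ.Nonempty) (hsub : Γ ⊆ NN d)
    (hdim : HasDim Γ 2) (hcl : Closed32 Γ) :
    ∃ Λ : Set (Fin d → ℤ), IsCoset Λ ∧ Γ = Λ ∩ NN d := by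
  obtain ⟨g, hg⟩ := hne
  have hfr := hdim g hg
  set H := Submodule.span ℤ ((· - g) '' Γ) with hH
  let b := Module.finBasisOfFinrankEq ℤ H hfr
  obtain ⟨e1, he1⟩ : ∃ e : Fin d → ℤ, e = (b 0 : Fin d → ℤ) := ⟨_, rfl⟩
  obtain ⟨e2, he2⟩ : ∃ e : Fin d → ℤ, e = (b 1 : Fin d → ℤ) := ⟨_, rfl⟩
  have hsurj : ∀ v ∈ H, ∃ x : ℤ × ℤ, v = x.1 • e1 + x.2 • e2 := by
    intro v hv
    have := b.sum_repr ⟨v, hv⟩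
    rw [Fin.sum_univ_two] at this
    refine ⟨(b.repr ⟨v, hv⟩ 0, b.repr ⟨v, hv⟩ 1), ?_⟩
    have h2 := congrArg (Subtype.val) this
    rw [he1, he2]
    simpa using h2.symm
  have hmem : ∀ x : ℤ × ℤ, x.1 • e1 + x.2 • e2 ∈ H := by
    intro x
    rw [he1, he2]
    exact H.add_mem (H.smul_mem _ (b 0).2) (H.smul_mem _ (b 1).2)
  have hinj : ∀ x y : ℤ × ℤ, x.1 • e1 + x.2 • e2 = y.1 • e1 + y.2 • e2 → x = y := by
    intro x y hxy
    have h1 : x.1 • b 0 + x.2 • b 1 = y.1 • b 0 + y.2 • b 1 := by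
      apply Subtype.ext
      rw [he1, he2] at hxy
      simpa using hxy
    have h0 := congrArg (fun v => b.repr v 0) h1
    have h3 := congrArg (fun v => b.repr v 1) h1
    simp at h0 h3
    exact Prod.ext h0 h3
  have key := planar (P := fun x => g + (x.1 • e1 + x.2 • e2) ∈ NN d)
    (G := fun x => g + (x.1 • e1 + x.2 • e2) ∈ Γ) ?_ ?_ (fun x hx => hsub hx) 0 (by simpa using hg) ?_
  · refine ⟨(g + ·) '' (H.toAddSubgroup : Set (Fin d → ℤ)), ⟨g, H.toAddSubgroup, rfl⟩, ?_⟩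
    ext v
    constructor
    · intro hv
      refine ⟨⟨v - g, ?_, by simp⟩, hsub hv⟩
      exact Submodule.subset_span ⟨v, hv, rfl⟩
    · rintro ⟨⟨w, hw, rfl⟩, hv⟩
      obtain ⟨x, hx⟩ := hsurj w hw
      have := key x
      rw [← hx] at this
      exact this hv
  · constructor
    intro N k l m u v w x hN hk hl hm hs hu hv hw h1 h2 j
    have hu' := hu j
    have hv' := hv j
    have hw' := hw j
    simp only [Pi.add_apply, Pi.smul_apply, smul_eq_mul] at hu' hv' hw' ⊢
    have : N * (g j + (x.1 * e1 j + x.2 * e2 j)) = k * (g j + (u.1 * e1 j + u.2 * e2 j)) +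
        l * (g j + (v.1 * e1 j + v.2 * e2 j)) + m * (g j + (w.1 * e1 j + w.2 * e2 j)) := by
      linear_combination e1 j * h1 + e2 j * h2 - g j * hs
    have h0 : 0 ≤ N * (g j + (x.1 * e1 j + x.2 * e2 j)) := by rw [this]; positivity
    exact nonneg_of_mul_nonneg_right h0 hN
  · intro a b c u v x ha hb hc hu hv hx h1 h2
    have := hcl _ _ _ _ _ ha hb hc hu hv
    have e : g + (a.1 • e1 + a.2 • e2) + (g + (b.1 • e1 + b.2 • e2)) + (g + (c.1 • e1 + c.2 • e2))
      - (g + (u.1 • e1 + u.2 • e2)) - (g + (v.1 • e1 + v.2 • e2)) = g + (x.1 • e1 + x.2 • e2) := by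
      rw [h1, h2]; ext j
      simp only [Pi.add_apply, Pi.sub_apply, Pi.smul_apply, smul_eq_mul]; ring
    rw [e] at this
    exact this hx
  · intro K hK
    let φ : ℤ × ℤ →+ (Fin d → ℤ) :=
      { toFun := fun x => x.1 • e1 + x.2 • e2
        map_zero' := by simp
        map_add' := by intro x y; simp only [Prod.fst_add, Prod.snd_add, add_smul]; abel }
    have hle : H ≤ AddSubgroup.toIntSubmodule (K.map φ) := by
      rw [hH, Submodule.span_le]
      rintro _ ⟨γ, hγ, rfl⟩
      obtain ⟨x, hx⟩ := hsurj (γ - g) (Submodule.subset_span ⟨γ, hγ, rfl⟩)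
      refine ⟨x, ?_, hx.symm⟩
      have := hK x (by rw [← hx]; simpa using hγ)
      simpa using this
    rw [eq_top_iff]
    intro x _
    obtain ⟨y, hy, hxy⟩ := hle (hmem x)
    rwa [← hinj y x hxy]

abbrev Z3 := Fin 3 → ℤ

theorem lemX (a b c d : Z3) (ha : a ∈ NN 3) (hb : b ∈ NN 3) (hc : c ∈ NN 3) (hd : d ∈ NN 3)
    (h : ∀ i, d i ≤ a i ∨ d i ≤ b i ∨ d i ≤ c i) :
    a + b - d ∈ NN 3 ∨ a + c - d ∈ NN 3 ∨ b + c - d ∈ NN 3 ∨ a + b + c - d - d ∈ NN 3 ∨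
      d + d - a ∈ NN 3 ∨ d + d - b ∈ NN 3 ∨ d + d - c ∈ NN 3 := by
  by_cases h1 : a + b - d ∈ NN 3
  · exact Or.inl h1
  by_cases h2 : a + c - d ∈ NN 3
  · exact Or.inr (Or.inl h2)
  by_cases h3 : b + c - d ∈ NN 3
  · exact Or.inr (Or.inr (Or.inl h3))
  by_cases h4 : a + b + c - d - d ∈ NN 3
  · exact Or.inr (Or.inr (Or.inr (Or.inl h4)))
  simp only [NN, Set.mem_ofPred_eq, not_forall, not_le, Pi.add_apply, Pi.sub_apply] at h1 h2 h3 h4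
  obtain ⟨k, hk⟩ := h1
  obtain ⟨j, hj⟩ := h2
  obtain ⟨i, hi⟩ := h3
  obtain ⟨n, hn⟩ := h4
  have a0 : ∀ m, 0 ≤ a m := ha
  have b0 : ∀ m, 0 ≤ b m := hb
  have c0 : ∀ m, 0 ≤ c m := hc
  have d0 : ∀ m, 0 ≤ d m := hd
  have hkj : k ≠ j := by
    rintro rfl
    have := h k; have := a0 k; have := b0 k; have := c0 k; omega
  have hki : k ≠ i := by
    rintro rfl
    have := h k; have := a0 k; have := b0 k; have := c0 k; omega
  have hji : j ≠ i := by
    rintro rfl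
    have := h j; have := a0 j; have := b0 j; have := c0 j; omega
  have hcov : ∀ m : Fin 3, m = i ∨ m = j ∨ m = k := by
    intro m; omega
  right; right; right; right
  have ai := a0 i; have bi := b0 i; have ci := c0 i; have di := d0 i; have hhi := h i
  have aj := a0 j; have bj := b0 j; have cj := c0 j; have dj := d0 j; have hhj := h j
  have ak := a0 k; have bk := b0 k; have ck := c0 k; have dk := d0 k; have hhk := h k
  rcases hcov n with rfl | rfl | rfl
  · left
    intro m
    simp only [Pi.add_apply, Pi.sub_apply]
    rcases hcov m with rfl | rfl | rfl <;> omega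
  · right; left
    intro m
    simp only [Pi.add_apply, Pi.sub_apply]
    rcases hcov m with rfl | rfl | rfl <;> omega
  · right; right
    intro m
    simp only [Pi.add_apply, Pi.sub_apply]
    rcases hcov m with rfl | rfl | rfl <;> omega

theorem cl_add {d : ℕ} {G : Set (Fin d → ℤ)} (hG : Closed32 G) {a b c : Fin d → ℤ} (ha : a ∈ G) (hb : b ∈ G)
    (hc : c ∈ G) (h : a + b - c ∈ NN d) : a + b - c ∈ G := by
  have e : a + b + c - c - c = a + b - c := by abel
  have := hG a b c c c ha hb hc hc hc
  rw [e] at this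
  exact this h

/-- data for the finite case -/
structure FData (G : Set Z3) (p : Fin 3 → Z3) (l : Z3 →+ ℤ) (c H : ℤ) : Prop where
  sub : G ⊆ NN 3
  cl : Closed32 G
  mem : ∀ i, p i ∈ G
  top : ∀ i, ∀ x ∈ G, x i ≤ p i i
  ext : ∀ i, ∀ x ∈ G, ∀ y ∈ G, x + y = p i + p i → x = p i
  lp : ∀ i, l (p i) = c
  bd : ∀ x ∈ G, |l x - c| ≤ H
  pos : 0 < H

theorem FData.X {G : Set Z3} {p : Fin 3 → Z3} {l : Z3 →+ ℤ} {c H : ℤ} (F : FData G p l c H)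
    {a b u w : Z3} (ha : a ∈ G) (hb : b ∈ G) (hu : u ∈ G) (hw : w ∈ G)
    (h : ∀ i, w i ≤ a i ∨ w i ≤ u i ∨ w i ≤ b i) :
    a + u - w ∈ G ∨ a + b - w ∈ G ∨ u + b - w ∈ G ∨ a + u + b - w - w ∈ G ∨
      w + w - a ∈ G ∨ w + w - u ∈ G ∨ w + w - b ∈ G := by
  rcases lemX a u b w (F.sub ha) (F.sub hu) (F.sub hb) (F.sub hw) h with h | h | h | h | h | h | h
  · exact Or.inl (cl_add F.cl ha hu hw h)
  · exact Or.inr (Or.inl (cl_add F.cl ha hb hw h))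
  · exact Or.inr (Or.inr (Or.inl (cl_add F.cl hu hb hw h)))
  · exact Or.inr (Or.inr (Or.inr (Or.inl (F.cl _ _ _ _ _ ha hu hb hw hw h))))
  · exact Or.inr (Or.inr (Or.inr (Or.inr (Or.inl (cl_add F.cl hw hw ha h)))))
  · exact Or.inr (Or.inr (Or.inr (Or.inr (Or.inr (Or.inl (cl_add F.cl hw hw hu h))))))
  · exact Or.inr (Or.inr (Or.inr (Or.inr (Or.inr (Or.inr (cl_add F.cl hw hw hb h))))))

theorem FData.Y {G : Set Z3} {p : Fin 3 → Z3} {l : Z3 →+ ℤ} {c H : ℤ} (F : FData G p l c H)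
    {a b u w : Z3} (ha : a ∈ G) (hb : b ∈ G) (hu : u ∈ G) (hw : w ∈ G)
    (la : l a = c) (lb : l b = c) (s : ℤ) (lu : l u = c + s) (lw : l w = c - s) (hs : |s| = H)
    (h : ∀ i, w i ≤ a i ∨ w i ≤ u i ∨ w i ≤ b i) : a + b - w ∈ G := by
  have hp := F.pos
  rcases F.X ha hb hu hw h with h | h | h | h | h | h | h
  all_goals first
    | exact h
    | (exfalso
       have := F.bd _ h
       simp only [map_add, map_sub, la, lb, lu, lw] at this
       rw [abs_le] at this
       rcases abs_cases s with ⟨e, _⟩ | ⟨e, _⟩ <;> linarith)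

theorem FData.F2 {G : Set Z3} {p : Fin 3 → Z3} {l : Z3 →+ ℤ} {c H : ℤ} (F : FData G p l c H)
    (i j k : Fin 3) (hcov : ∀ m, m = i ∨ m = j ∨ m = k) (d e : Z3) (hd : d ∈ G) (he : e ∈ G)
    (hde : d + e = p i + p j) (s : ℤ) (ld : l d = c + s) (le : l e = c - s) (hs : |s| = H)
    (hf : p k + d - p j ∈ G) (hg : p k + d - p i ∈ G) : False := by
  have hp := F.pos
  have hs0 : s ≠ 0 := by rintro rfl; simp at hs; omega
  have lpi := F.lp i
  have lpj := F.lp j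
  have lpk := F.lp k
  have ed : d = p i + p j - e := by rw [← hde]; abel
  -- generic step
  have step : ∀ i j : Fin 3, (∀ m, m = i ∨ m = j ∨ m = k) → d + e = p i + p j →
      p k + d - p j ∈ G → e i ≤ (p k + d - p j) i ∧ e k ≤ (p k + d - p j) k := by
    intro i j hcov hde hf1
    obtain ⟨f, hff⟩ : ∃ f, f = p k + d - p j := ⟨_, rfl⟩
    rw [← hff] at hf1 ⊢
    have lf : l f = c + s := by rw [hff]; simp only [map_add, map_sub, F.lp, ld]; ring
    have h1 : e i ≤ f i := by
      by_contra hlt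
      push Not at hlt
      have := F.Y (F.mem j) (F.mem k) he hf1 (F.lp j) (F.lp k) (-s) (by rw [le]; ring) (by rw [lf]; ring)
        (by rwa [abs_neg]) (by
          intro m
          rcases hcov m with rfl | rfl | rfl
          · right; left; exact hlt.le
          · left; exact F.top _ _ hf1
          · right; right; exact F.top _ _ hf1)
      have h2 := F.ext j d hd _ this (by rw [hff]; abel)
      apply hs0
      have := F.lp j
      rw [← h2, ld] at this; linarith
    refine ⟨h1, ?_⟩
    by_contra hlt
    push Not at hlt
    have a1 := F.Y (F.mem i) (F.mem j) he hf1 (F.lp i) (F.lp j) (-s) (by rw [le]; ring) (by rw [lf]; ring)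
      (by rwa [abs_neg]) (by
        intro m
        rcases hcov m with rfl | rfl | rfl
        · left; exact F.top _ _ hf1
        · right; right; exact F.top _ _ hf1
        · right; left; exact hlt.le)
    have a2 := F.Y (F.mem j) (F.mem k) hf1 he (F.lp j) (F.lp k) s lf le hs (by
        intro m
        rcases hcov m with rfl | rfl | rfl
        · right; left; exact h1
        · left; exact F.top _ _ he
        · right; right; exact F.top _ _ he)
    have h2 := F.ext j _ a2 _ a1 (by
      have : e = p i + p j - d := by rw [← hde]; abel
      rw [hff, this]; abel)
    have h3 := congrArg l h2
    simp only [map_add, map_sub, F.lp, le] at h3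
    apply hs0; linarith
  obtain ⟨f1, f3⟩ := step i j hcov hde hf
  obtain ⟨g2, g3⟩ := step j i (fun m => by have := hcov m; tauto) (by rw [hde]; abel) hg
  have := F.X (a := p k + d - p j) (b := p k + d - p i) (u := d) (w := e) hf hg hd he (by
    intro m
    rcases hcov m with rfl | rfl | rfl
    · left; exact f1
    · right; right; exact g2
    · left; exact f3)
  rcases this with h | h | h | h | h | h | h
  all_goals
    have := F.bd _ h
    simp only [map_add, map_sub, F.lp, ld, le] at this
    rw [abs_le] at this
    rcases abs_cases s with ⟨e, _⟩ | ⟨e, _⟩ <;> linarith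

theorem FData.F1 {G : Set Z3} {p : Fin 3 → Z3} {l : Z3 →+ ℤ} {c H : ℤ} (F : FData G p l c H)
    (i j k : Fin 3) (hcov : ∀ m, m = i ∨ m = j ∨ m = k) (d e : Z3) (hd : d ∈ G) (he : e ∈ G)
    (hde : d + e = p i + p j) (s : ℤ) (ld : l d = c + s) (le : l e = c - s) (hs : |s| = H) :
    False := by
  have hp := F.pos
  have hs0 : s ≠ 0 := by rintro rfl; simp at hs; omega
  have ee : e = p i + p j - d := by rw [← hde]; abel
  have step : ∀ i j : Fin 3, (∀ m, m = i ∨ m = j ∨ m = k) → d + e = p i + p j →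
      (e j ≤ d j → p k + d - p j ∈ G) ∧ (d j ≤ e j → p i + p k - d ∈ G) := by
    intro i j hcov hde
    have ee : e = p i + p j - d := by rw [← hde]; abel
    constructor
    · intro h
      have := F.Y (F.mem i) (F.mem k) hd he (F.lp i) (F.lp k) s ld le hs (by
        intro m
        rcases hcov m with rfl | rfl | rfl
        · left; exact F.top _ _ he
        · right; left; exact h
        · right; right; exact F.top _ _ he)
      have e2 : p k + d - p j = p i + p k - e := by rw [ee]; abel
      rw [e2]; exact this
    · intro h
      exact F.Y (F.mem i) (F.mem k) he hd (F.lp i) (F.lp k) (-s) (by rw [le]; ring) (by rw [ld]; ring)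
        (by rwa [abs_neg]) (by
        intro m
        rcases hcov m with rfl | rfl | rfl
        · left; exact F.top _ _ hd
        · right; left; exact h
        · right; right; exact F.top _ _ hd)
  obtain ⟨A1, A2⟩ := step i j hcov hde
  obtain ⟨B1, B2⟩ := step j i (fun m => by have := hcov m; tauto) (by rw [hde]; abel)
  have mixed : ∀ j, p k + d - p j ∈ G → p j + p k - d ∈ G → False := by
    intro j h1 h2
    have h3 := congrArg l (F.ext k _ h1 _ h2 (by abel))
    simp only [map_add, map_sub, F.lp, ld] at h3
    apply hs0; linarith
  rcases le_total (e j) (d j) with hj | hj <;> rcases le_total (e i) (d i) with hi | hi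
  · exact F.F2 i j k hcov d e hd he hde s ld le hs (A1 hj) (B1 hi)
  · exact mixed j (A1 hj) (B2 hi)
  · exact mixed i (B1 hi) (A2 hj)
  · refine F.F2 i j k hcov e d he hd (by rw [add_comm, hde]) (-s) (by rw [le]; ring) (by rw [ld]; ring)
      (by rwa [abs_neg]) ?_ ?_
    · have : p k + e - p j = p i + p k - d := by rw [ee]; abel
      rw [this]; exact A2 hj
    · have : p k + e - p i = p j + p k - d := by rw [ee]; abel
      rw [this]; exact B2 hi

theorem FData.contra {G : Set Z3} {p : Fin 3 → Z3} {l : Z3 →+ ℤ} {c H : ℤ} (F : FData G p l c H)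
    (d : Z3) (hd : d ∈ G) (hdH : |l d - c| = H) : False := by
  have hp := F.pos
  obtain ⟨s, hs⟩ : ∃ s, s = l d - c := ⟨_, rfl⟩
  rw [← hs] at hdH
  have ld : l d = c + s := by rw [hs]; ring
  have key : ∀ i j k : Fin 3, (∀ m, m = i ∨ m = j ∨ m = k) → p i + p j - d ∈ G → False := by
    intro i j k hcov h
    exact F.F1 i j k hcov d _ hd h (by abel) s ld (by simp only [map_add, map_sub, F.lp, ld]; ring) hdH
  rcases F.X (F.mem 0) (F.mem 2) (F.mem 1) hd (by
    intro m
    fin_cases m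
    · exact Or.inl (F.top _ _ hd)
    · exact Or.inr (Or.inl (F.top _ _ hd))
    · exact Or.inr (Or.inr (F.top _ _ hd))) with h | h | h | h
  · exact key 0 1 2 (by decide) h
  · exact key 0 2 1 (by decide) h
  · exact key 1 2 0 (by decide) h
  rcases h with h | h | h | h
  all_goals
    have := F.bd _ h
    simp only [map_add, map_sub, F.lp, ld] at this
    rw [abs_le] at this
    rcases abs_cases s with ⟨e, _⟩ | ⟨e, _⟩ <;> linarith

def dotHom (l : Z3) : Z3 →+ ℤ where
  toFun x := ∑ j, l j * x j
  map_zero' := by simp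
  map_add' := by intro x y; simp [mul_add, Finset.sum_add_distrib]

theorem exists_extreme {G : Set Z3} (hfin : G.Finite) (hne : G.Nonempty) (i : Fin 3) :
    ∃ q ∈ G, (∀ x ∈ G, x i ≤ q i) ∧ ∀ x ∈ G, ∀ y ∈ G, x + y = q + q → x = q := by
  obtain ⟨r, hr, hrmax⟩ := Set.exists_max_image G (fun x => x i) hfin hne
  obtain ⟨q, ⟨hq, hqi⟩, hqmax⟩ := Set.exists_max_image {x ∈ G | x i = r i}
    (fun x => ∑ j, x j ^ 2) (hfin.subset (Set.sep_subset _ _)) ⟨r, hr, rfl⟩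
  refine ⟨q, hq, fun x hx => hqi ▸ hrmax x hx, ?_⟩
  intro x hx y hy hxy
  have e : ∀ j, x j + y j = q j + q j := fun j => congrFun hxy j
  have h1 := hrmax x hx
  have h2 := hrmax y hy
  have h3 := e i
  have hx2 := hqmax x ⟨hx, by omega⟩
  have hy2 := hqmax y ⟨hy, by omega⟩
  simp only [Fin.sum_univ_three] at hx2 hy2
  have e0 := e 0
  have e1 := e 1
  have e2 := e 2
  have y0 : y 0 = 2 * q 0 - x 0 := by linarith
  have y1 : y 1 = 2 * q 1 - x 1 := by linarith
  have y2 : y 2 = 2 * q 2 - x 2 := by linarith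
  rw [y0, y1, y2] at hy2
  have hz : (x 0 - q 0) ^ 2 + (x 1 - q 1) ^ 2 + (x 2 - q 2) ^ 2 ≤ 0 := by nlinarith
  have z0 : x 0 - q 0 = 0 := by
    have := sq_nonneg (x 1 - q 1); have := sq_nonneg (x 2 - q 2)
    exact pow_eq_zero_iff (two_ne_zero) |>.1 (le_antisymm (by linarith) (sq_nonneg _))
  have z1 : x 1 - q 1 = 0 := by
    have := sq_nonneg (x 0 - q 0); have := sq_nonneg (x 2 - q 2)
    exact pow_eq_zero_iff (two_ne_zero) |>.1 (le_antisymm (by linarith) (sq_nonneg _))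
  have z2 : x 2 - q 2 = 0 := by
    have := sq_nonneg (x 1 - q 1); have := sq_nonneg (x 0 - q 0)
    exact pow_eq_zero_iff (two_ne_zero) |>.1 (le_antisymm (by linarith) (sq_nonneg _))
  ext j
  fin_cases j
  · show x 0 = q 0
    linarith
  · show x 1 = q 1
    linarith
  · show x 2 = q 2
    linarith

theorem finite_case {G : Set Z3} (hfin : G.Finite) (hne : G.Nonempty) (hsub : G ⊆ NN 3)
    (hcl : Closed32 G) (I : Set (Fin 3)) (i0 : Fin 3) (hi0 : i0 ∈ I)
    (hI : ∀ x ∈ G, ∀ i, i ∉ I → x i = 0) :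
    ∃ l : Z3, l ≠ 0 ∧ (∀ i, i ∉ I → l i = 0) ∧ ∀ x ∈ G, ∀ y ∈ G, dotHom l x = dotHom l y := by
  choose q hq hqtop hqext using exists_extreme hfin hne
  let p : Fin 3 → Z3 := fun i => if i ∈ I then q i else q i0
  let M : Matrix (Fin 3) (Fin 3) ℤ := fun i j =>
    if i ∈ I then (p i j - p i0 j) else (if i = j then 1 else 0)
  have hdet : M.det = 0 := by
    apply Matrix.det_eq_zero_of_row_eq_zero i0
    intro j
    simp [M, hi0]
  obtain ⟨l, hl0, hl⟩ := Matrix.exists_mulVec_eq_zero_iff.2 hdet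
  have hrow : ∀ i, ∑ j, M i j * l j = 0 := fun i => congrFun hl i
  have hloff : ∀ i, i ∉ I → l i = 0 := by
    intro i hi
    have := hrow i
    simpa [M, hi] using this
  have hlp : ∀ i, dotHom l (p i) = dotHom l (p i0) := by
    intro i
    by_cases hi : i ∈ I
    · have := hrow i
      simp only [M, hi, if_true, sub_mul, Finset.sum_sub_distrib] at this
      simp only [dotHom, AddMonoidHom.coe_mk, ZeroHom.coe_mk, mul_comm (l _)]
      linarith
    · have : p i = p i0 := by simp [p, hi, hi0]
      rw [this]
  refine ⟨l, hl0, hloff, ?_⟩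
  suffices hs : ∀ x ∈ G, dotHom l x = dotHom l (p i0) by
    intro x hx y hy
    rw [hs x hx, hs y hy]
  obtain ⟨d, hd, hdmax⟩ := Set.exists_max_image G (fun x => |dotHom l x - dotHom l (p i0)|) hfin hne
  by_contra hno
  push Not at hno
  obtain ⟨x, hx, hxne⟩ := hno
  have F : FData G p (dotHom l) (dotHom l (p i0)) (|dotHom l d - dotHom l (p i0)|) :=
    { sub := hsub
      cl := hcl
      mem := by
        intro i
        by_cases hi : i ∈ I <;> simp only [p, hi, if_true, if_false] <;> exact hq _
      top := by
        intro i x hx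
        by_cases hi : i ∈ I
        · simp only [p, hi, if_true]; exact hqtop i x hx
        · rw [hI x hx i hi]
          simp only [p, hi, if_false]
          rw [hI _ (hq i0) i hi]
      ext := by
        intro i
        by_cases hi : i ∈ I <;> simp only [p, hi, if_true, if_false] <;> exact hqext _
      lp := hlp
      bd := hdmax
      pos := by
        refine lt_of_lt_of_le ?_ (hdmax x hx)
        exact abs_pos.2 (sub_ne_zero.2 hxne) }
  exact F.contra d hd rfl

theorem antichain_finite {G : Set Z3} (hsub : G ⊆ NN 3)
    (hanti : ∀ x ∈ G, ∀ y ∈ G, (∀ i, x i ≤ y i) → x = y) : G.Finite := by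
  let T : Z3 → (Fin 3 → ℕ) := fun x i => (x i).toNat
  have hT : Set.InjOn T G := by
    intro x hx y hy hxy
    ext i
    have h1 : 0 ≤ x i := hsub hx i
    have h2 : 0 ≤ y i := hsub hy i
    have h3 : (x i).toNat = (y i).toNat := congrFun hxy i
    omega
  refine Set.Finite.of_finite_image ?_ hT
  refine ((wellQuasiOrderedLE_iff (α := Fin 3 → ℕ)).1 inferInstance).2 _ ?_
  rintro _ ⟨x, hx, rfl⟩ _ ⟨y, hy, rfl⟩ hne hle
  apply hne
  congr 1
  apply hanti x hx y hy
  intro i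
  have h1 : 0 ≤ x i := hsub hx i
  have h2 : 0 ≤ y i := hsub hy i
  have h3 : (x i).toNat ≤ (y i).toNat := hle i
  omega

theorem dim3_contra {Γ : Set Z3} (hne : Γ.Nonempty) (hdim : HasDim Γ 3) (l : Z3) (hl : l ≠ 0)
    (h : ∀ x ∈ Γ, ∀ y ∈ Γ, dotHom l x = dotHom l y) : False := by
  obtain ⟨g, hg⟩ := hne
  have hfr := hdim g hg
  let L : Z3 →ₗ[ℤ] ℤ := (dotHom l).toIntLinearMap
  have hle : Submodule.span ℤ ((· - g) '' Γ) ≤ LinearMap.ker L := by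
    rw [Submodule.span_le]
    rintro _ ⟨x, hx, rfl⟩
    show dotHom l (x - g) = 0
    rw [map_sub, h x hx g hg, sub_self]
  have h1 : 3 ≤ Module.finrank ℤ (LinearMap.ker L) := hfr.symm.le.trans (Submodule.finrank_mono hle)
  have h2 := Submodule.finrank_quotient_add_finrank (LinearMap.ker L)
  rw [L.quotKerEquivRange.finrank_eq] at h2
  have h3 : Module.finrank ℤ Z3 = 3 := by simp
  have h4 : Module.finrank ℤ (LinearMap.range L) = 0 := by omega
  rw [Submodule.finrank_eq_zero] at h4
  have h5 : L = 0 := LinearMap.range_eq_bot.1 h4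
  apply hl
  ext j
  have : dotHom l (Pi.single j 1) = 0 := by
    have := LinearMap.congr_fun h5 (Pi.single j 1)
    exact this
  simpa [dotHom, Pi.single_apply] using this

theorem large_mul {d : ℕ} (v w : Fin d → ℤ) (hv : ∀ j, 0 ≤ v j) (hw : ∀ j, v j = 0 → 0 ≤ w j) :
    ∃ M : ℕ, ∀ j, 0 ≤ (w + M • v) j ∧ (v j ≠ 0 → 0 < (w + M • v) j) := by
  refine ⟨(∑ j, (w j).natAbs) + 1, ?_⟩
  intro j
  have h1 : (w j).natAbs ≤ ∑ j, (w j).natAbs :=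
    Finset.single_le_sum (f := fun j => (w j).natAbs) (fun _ _ => Nat.zero_le _) (Finset.mem_univ j)
  have h2 : (((∑ j, (w j).natAbs) + 1 : ℕ) : ℤ) ≥ |w j| + 1 := by
    rw [Int.abs_eq_natAbs]; exact_mod_cast Nat.succ_le_succ h1
  have h3 := neg_abs_le (w j)
  have h4 := abs_nonneg (w j)
  have h5 := hv j
  simp only [Pi.add_apply, Pi.smul_apply]
  simp only [nsmul_eq_mul]
  by_cases h0 : v j = 0
  · rw [h0, mul_zero, add_zero]
    exact ⟨hw j h0, fun h => absurd rfl h⟩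
  · have h6 : 1 ≤ v j := by omega
    have h7 : 0 < w j + (((∑ j, (w j).natAbs) + 1 : ℕ) : ℤ) * v j := by nlinarith
    exact ⟨h7.le, fun _ => h7⟩

theorem period_nsmul {d : ℕ} {Γ : Set (Fin d → ℤ)} {v : Fin d → ℤ} (hv : ∀ γ ∈ Γ, γ + v ∈ Γ) (M : ℕ) :
    ∀ γ ∈ Γ, γ + M • v ∈ Γ := by
  induction M with
  | zero => intro γ h; simpa using h
  | succ n ih =>
    intro γ h
    have := hv _ (ih γ h)
    rwa [add_assoc, ← succ_nsmul] at this

theorem coset_of_strict_period {d : ℕ} {Γ : Set (Fin d → ℤ)} (hne : Γ.Nonempty) (hsub : Γ ⊆ NN d)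
    (hcl : Closed32 Γ) (v : Fin d → ℤ) (hv : ∀ γ ∈ Γ, γ + v ∈ Γ) (hpos : ∀ j, 0 < v j) :
    ∃ Λ : Set (Fin d → ℤ), IsCoset Λ ∧ Γ = Λ ∩ NN d := by
  obtain ⟨g, hg⟩ := hne
  have big : ∀ w : Fin d → ℤ, ∃ M : ℕ, w + M • v ∈ NN d := by
    intro w
    obtain ⟨M, hM⟩ := large_mul v w (fun j => (hpos j).le) (fun j h => absurd h (hpos j).ne')
    exact ⟨M, fun j => (hM j).1⟩
  refine ⟨(g + ·) '' (AddSubgroup.closure ((· - g) '' Γ) : Set (Fin d → ℤ)), ⟨g, _, rfl⟩, ?_⟩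
  ext x
  constructor
  · intro hx
    exact ⟨⟨x - g, AddSubgroup.subset_closure ⟨x, hx, rfl⟩, by simp⟩, hsub hx⟩
  · rintro ⟨⟨h, hh, rfl⟩, hx⟩
    have key : ∀ γ ∈ Γ, ∃ M : ℕ, γ + h + M • v ∈ Γ := by
      refine AddSubgroup.closure_induction (p := fun h _ => ∀ γ ∈ Γ, ∃ M : ℕ, γ + h + M • v ∈ Γ)
        ?_ ?_ ?_ ?_ hh
      · rintro _ ⟨α, hα, rfl⟩ γ hγ
        obtain ⟨M, hM⟩ := big (γ + α - g)
        refine ⟨M, ?_⟩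
        have e : γ + (α - g) + M • v = γ + (α + M • v) - g := by abel
        simp only [e]
        refine cl_add hcl hγ (period_nsmul hv M α hα) hg ?_
        convert hM using 1; abel
      · intro γ hγ
        exact ⟨0, by simpa using hγ⟩
      · intro x y _ _ ix iy γ hγ
        obtain ⟨M, hM⟩ := ix γ hγ
        obtain ⟨N, hN⟩ := iy _ hM
        refine ⟨M + N, ?_⟩
        convert hN using 1
        rw [add_nsmul]; abel
      · intro x _ ix γ hγ
        obtain ⟨M, hM⟩ := ix γ hγ
        obtain ⟨N, hN⟩ := big (γ - x)
        refine ⟨N, ?_⟩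
        have e : γ + -x + N • v = γ + (γ + (N + M) • v) - (γ + x + M • v) := by
          rw [add_nsmul]; abel
        rw [← sub_eq_add_neg] at e
        rw [← sub_eq_add_neg, e]
        rw [e] at hN
        exact cl_add hcl hγ (period_nsmul hv _ γ hγ) hM hN
    obtain ⟨M, hM⟩ := key g hg
    have e : g + h = (g + h + M • v) + g - (g + M • v) := by abel
    simp only at hx ⊢
    rw [e] at hx ⊢
    exact cl_add hcl hM hg (period_nsmul hv M g hg) hx


theorem coset_of_closed_dim3 (Γ : Set Z3) (hne : Γ.Nonempty) (hsub : Γ ⊆ NN 3)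
    (hdim : HasDim Γ 3) (hcl : Closed32 Γ) :
    ∃ Λ : Set Z3, IsCoset Λ ∧ Γ = Λ ∩ NN 3 := by
  let V : Set Z3 := {v | v ∈ NN 3 ∧ ∀ γ ∈ Γ, γ + v ∈ Γ}
  have hV0 : V.Nonempty := ⟨0, fun j => le_refl _, fun γ h => by simpa using h⟩
  let f : Z3 → ℕ := fun v => (Finset.univ.filter (fun j => v j = 0)).card
  obtain ⟨v, ⟨hv0, hv⟩, hmin⟩ := (measure f).wf.has_min V hV0
  have hmin : ∀ w ∈ V, f v ≤ f w := fun w hw => not_lt.1 (hmin w hw)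
  by_cases hall : ∀ j, v j ≠ 0
  · exact coset_of_strict_period hne hsub hcl v hv (fun j => lt_of_le_of_ne (hv0 j) (hall j).symm)
  push Not at hall
  obtain ⟨i0, hi0⟩ := hall
  exfalso
  let I : Set (Fin 3) := {j | v j = 0}
  let π : Z3 →+ Z3 :=
    { toFun := fun x j => if v j = 0 then x j else 0
      map_zero' := by ext j; simp
      map_add' := by intro x y; ext j; by_cases h : v j = 0 <;> simp [h] }
  have hπ0 : ∀ x j, v j = 0 → π x j = x j := fun x j h => by simp [π, h]
  have hπ1 : ∀ x j, v j ≠ 0 → π x j = 0 := fun x j h => by simp [π, h]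
  have hπv : π v = 0 := by
    ext j
    by_cases h : v j = 0
    · rw [hπ0 _ _ h, h]; rfl
    · rw [hπ1 _ _ h]; rfl
  have lift : ∀ w : Z3, π w ∈ NN 3 → ∃ M : ℕ, ∀ j, 0 ≤ (w + M • v) j ∧ (v j ≠ 0 → 0 < (w + M • v) j) := by
    intro w hw
    refine large_mul v w hv0 (fun j h => ?_)
    have := hw j
    rwa [hπ0 _ _ h] at this
  have hGsub : π '' Γ ⊆ NN 3 := by
    rintro _ ⟨x, hx, rfl⟩ j
    by_cases h : v j = 0
    · rw [hπ0 _ _ h]; exact hsub hx j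
    · rw [hπ1 _ _ h]
  have hGcl : Closed32 (π '' Γ) := by
    rintro _ _ _ _ _ ⟨a, ha, rfl⟩ ⟨b, hb, rfl⟩ ⟨c, hc, rfl⟩ ⟨u, hu, rfl⟩ ⟨w, hw, rfl⟩ hn
    rw [← map_add, ← map_add, ← map_sub, ← map_sub] at hn ⊢
    obtain ⟨M, hM⟩ := lift _ hn
    have e : a + b + c - u - w + M • v = (a + M • v) + b + c - u - w := by abel
    refine ⟨a + b + c - u - w + M • v, ?_, ?_⟩
    · rw [e]
      refine hcl _ _ _ _ _ (period_nsmul hv M a ha) hb hc hu hw ?_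
      rw [← e]; exact fun j => (hM j).1
    · rw [map_add, map_nsmul, hπv]; simp
  have hanti : ∀ x ∈ π '' Γ, ∀ y ∈ π '' Γ, (∀ i, x i ≤ y i) → x = y := by
    rintro _ ⟨x, hx, rfl⟩ _ ⟨y, hy, rfl⟩ hxy
    by_contra hne
    obtain ⟨M, hM⟩ := lift (y - x) (by
      rw [map_sub]; intro j; have := hxy j; simp only [Pi.sub_apply]; linarith)
    have hw : y - x + M • v ∈ V := by
      refine ⟨fun j => (hM j).1, ?_⟩
      intro γ hγ
      have e : γ + (y - x + M • v) = γ + (y + M • v) - x := by abel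
      have h2 : γ + (y + M • v) - x ∈ NN 3 := by
        rw [← e]; intro j
        have := hsub hγ j; have := (hM j).1
        rw [Pi.add_apply]; linarith
      rw [e]
      exact cl_add hcl hγ (period_nsmul hv M y hy) hx h2
    have h1 := hmin _ hw
    obtain ⟨j, hj⟩ := Function.ne_iff.1 hne
    have hj0 : v j = 0 := by
      by_contra h
      rw [hπ1 _ _ h, hπ1 _ _ h] at hj
      exact hj rfl
    have h2 : f (y - x + M • v) < f v := by
      apply Finset.card_lt_card
      rw [Finset.ssubset_iff_of_subset]
      · refine ⟨j, by simp [hj0], ?_⟩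
        rw [hπ0 _ _ hj0, hπ0 _ _ hj0] at hj
        simp only [Finset.mem_filter, Finset.mem_univ, true_and, Pi.add_apply, Pi.sub_apply,
          Pi.smul_apply, hj0, smul_zero, add_zero]
        intro h; exact hj (by linarith)
      · intro i hi
        simp only [Finset.mem_filter, Finset.mem_univ, true_and] at hi ⊢
        by_contra h
        have := (hM i).2 h
        omega
    omega
  obtain ⟨l, hl0, hloff, hlc⟩ := finite_case (antichain_finite hGsub hanti) (hne.image π) hGsub hGcl I i0 hi0
    (by rintro _ ⟨x, hx, rfl⟩ i hi; exact hπ1 _ _ hi)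
  refine dim3_contra hne hdim l hl0 ?_
  have hlπ : ∀ x, dotHom l (π x) = dotHom l x := by
    intro x
    simp only [dotHom, AddMonoidHom.coe_mk, ZeroHom.coe_mk]
    refine Finset.sum_congr rfl (fun j _ => ?_)
    by_cases h : v j = 0
    · rw [hπ0 _ _ h]
    · rw [hloff j h]; simp
  intro x hx y hy
  rw [← hlπ x, ← hlπ y]
  exact hlc _ ⟨x, hx, rfl⟩ _ ⟨y, hy, rfl⟩

theorem torusChar_add {d : ℕ} (α β : Fin d → ℤ) (x : Torus d) :
    torusChar (α + β) x = torusChar α x * torusChar β x := by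
  simp only [torusChar, Pi.add_apply, ← Finset.prod_mul_distrib]
  refine Finset.prod_congr rfl (fun j _ => ?_)
  exact fourier_add

theorem torusChar_zero {d : ℕ} (x : Torus d) : torusChar 0 x = 1 := by
  simp [torusChar]

theorem torusChar_norm {d : ℕ} (α : Fin d → ℤ) (x : Torus d) : ‖torusChar α x‖ = 1 := by
  simp only [torusChar, norm_prod]
  refine Finset.prod_eq_one (fun j _ => ?_)
  rw [fourier_apply]
  exact Circle.norm_coe _

theorem torusChar_neg {d : ℕ} (α : Fin d → ℤ) (x : Torus d) :
    torusChar (-α) x = (starRingEnd ℂ) (torusChar α x) := by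
  simp only [torusChar, Pi.neg_apply, map_prod]
  refine Finset.prod_congr rfl (fun j _ => ?_)
  exact fourier_neg

theorem torusChar_continuous {d : ℕ} (α : Fin d → ℤ) : Continuous (torusChar α) := by
  unfold torusChar
  fun_prop

theorem torusChar_sub {d : ℕ} (α β : Fin d → ℤ) (x : Torus d) :
    torusChar (α - β) x = torusChar α x * (starRingEnd ℂ) (torusChar β x) := by
  rw [sub_eq_add_neg, torusChar_add, torusChar_neg]

theorem torusChar_at_zero {d : ℕ} (α : Fin d → ℤ) : torusChar α (0 : Torus d) = 1 := by
  simp only [torusChar]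
  refine Finset.prod_eq_one (fun j _ => ?_)
  simp

instance torus_prob (d : ℕ) : IsProbabilityMeasure (volume : Measure (Torus d)) := by
  constructor
  rw [volume_pi, Measure.pi_univ]
  simp [AddCircle.measure_univ]

theorem integral_fourier_one (n : ℤ) : ∫ x : AddCircle (1 : ℝ), fourier n x = if n = 0 then 1 else 0 := by
  have h := fourierCoeff_fourier (T := 1) n
  have h2 := congrFun h 0
  simp only [fourierCoeff, neg_zero, fourier_zero, one_smul] at h2
  rw [AddCircle.integral_haarAddCircle] at h2
  simp only [inv_one, one_smul] at h2
  rw [h2, Pi.single_apply]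
  simp only [eq_comm]

theorem torusChar_integral {d : ℕ} (α : Fin d → ℤ) :
    ∫ x : Torus d, torusChar α x = if α = 0 then 1 else 0 := by
  unfold torusChar
  rw [volume_pi, integral_fintype_prod_eq_prod (𝕜 := ℂ) (fun j (x : AddCircle (1:ℝ)) => (fourier (α j) x : ℂ))]
  simp only [integral_fourier_one]
  split_ifs with h
  · simp [h]
  · obtain ⟨j, hj⟩ := Function.ne_iff.1 h
    exact Finset.prod_eq_zero (Finset.mem_univ j) (by simpa using hj)

theorem torus_cont_integrable {d : ℕ} {E : Type*} [NormedAddCommGroup E] {f : Torus d → E}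
    (hf : Continuous f) : Integrable f :=
  hf.integrable_of_hasCompactSupport (HasCompactSupport.of_compactSpace f)

theorem trigPoly_continuous {d : ℕ} (F : Finset (Fin d → ℤ)) (a : (Fin d → ℤ) → ℂ) :
    Continuous (trigPoly F a) := by
  unfold trigPoly
  exact continuous_finsetSum _ (fun α _ => continuous_const.mul (torusChar_continuous α))

theorem eLpNorm_le_iff_integral {d : ℕ} {p : ℝ≥0∞} (hp0 : p ≠ 0) (hpt : p ≠ ⊤) {f g : Torus d → ℂ}
    (hf : Continuous f) (hg : Continuous g) :
    eLpNorm g p volume ≤ eLpNorm f p volume ↔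
      ∫ x, ‖g x‖ ^ p.toReal ≤ ∫ x, ‖f x‖ ^ p.toReal := by
  have hpos : 0 < p.toReal := ENNReal.toReal_pos hp0 hpt
  have mem : ∀ f : Torus d → ℂ, Continuous f → MemLp f p volume := by
    intro f hf
    exact hf.memLp_of_hasCompactSupport (HasCompactSupport.of_compactSpace f)
  rw [(mem f hf).eLpNorm_eq_integral_rpow_norm hp0 hpt, (mem g hg).eLpNorm_eq_integral_rpow_norm hp0 hpt]
  have nn : ∀ f : Torus d → ℂ, 0 ≤ ∫ x, ‖f x‖ ^ p.toReal := fun f =>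
    integral_nonneg (fun x => Real.rpow_nonneg (norm_nonneg _) _)
  rw [ENNReal.ofReal_le_ofReal_iff (Real.rpow_nonneg (nn f) _),
    Real.rpow_le_rpow_iff (nn g) (nn f) (inv_pos.2 hpos)]

theorem integral_sum_torusChar_zero {d : ℕ} {ι : Type*} (s : Finset ι) (c : ι → ℂ) (e : ι → Fin d → ℤ)
    (h : ∀ i ∈ s, e i ≠ 0) : ∫ x : Torus d, ∑ i ∈ s, c i * torusChar (e i) x = 0 := by
  rw [integral_finsetSum]
  · refine Finset.sum_eq_zero (fun i hi => ?_)
    rw [integral_const_mul, torusChar_integral, if_neg (h i hi), mul_zero]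
  · intro i _
    exact torus_cont_integrable (continuous_const.mul (torusChar_continuous _))

def Comp1 {d : ℕ} (Γ : Set (Fin d → ℤ)) : Prop :=
  ∀ a b c : Fin d → ℤ, a ∈ Γ → b ∈ Γ → c ∈ Γ → a + b - c ∈ NN d → a + b - c ∈ Γ

theorem contractive_of_ineq {d : ℕ} {Γ : Set (Fin d → ℤ)} (n : ℕ) (hn : n ≠ 0)
    (W : ℂ → ℂ)  (hW : Continuous W)
    (hineq : ∀ g h : ℂ, ‖g‖ ^ n + (W g * h).re ≤ ‖g + h‖ ^ n)
    (hz : ∀ F : Finset (Fin d → ℤ), ↑F ⊆ NN d → ∀ a : (Fin d → ℤ) → ℂ,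
      ∫ x, W (trigPoly (F.filter (· ∈ Γ)) a x) * trigPoly (F.filter (¬ · ∈ Γ)) a x = 0) :
    IsContractiveHp d n Γ := by
  intro F hF a
  rw [eLpNorm_le_iff_integral (by exact_mod_cast hn) (ENNReal.natCast_ne_top n)
    (trigPoly_continuous _ _) (trigPoly_continuous _ _)]
  simp only [ENNReal.toReal_natCast, Real.rpow_natCast]
  have hsplit : ∀ x, trigPoly F a x = trigPoly (F.filter (· ∈ Γ)) a x + trigPoly (F.filter (¬ · ∈ Γ)) a x := by
    intro x
    simp only [trigPoly]
    exact (Finset.sum_filter_add_sum_filter_not F _ _).symm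
  have c1 := trigPoly_continuous (F.filter (· ∈ Γ)) a
  have c2 := trigPoly_continuous (F.filter (¬ · ∈ Γ)) a
  have cW : Continuous (fun x => W (trigPoly (F.filter (· ∈ Γ)) a x) * trigPoly (F.filter (¬ · ∈ Γ)) a x) :=
    (hW.comp c1).mul c2
  have hre : ∫ x, (W (trigPoly (F.filter (· ∈ Γ)) a x) * trigPoly (F.filter (¬ · ∈ Γ)) a x).re = 0 := by
    have := integral_re (torus_cont_integrable cW)
    have h2 := hz F hF a
    rw [h2] at this
    simpa using this
  calc ∫ x, ‖trigPoly (F.filter (· ∈ Γ)) a x‖ ^ n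
      = ∫ x, (‖trigPoly (F.filter (· ∈ Γ)) a x‖ ^ n +
          (W (trigPoly (F.filter (· ∈ Γ)) a x) * trigPoly (F.filter (¬ · ∈ Γ)) a x).re) := by
        have i1 : Integrable (fun x => ‖trigPoly (F.filter (· ∈ Γ)) a x‖ ^ n) :=
          torus_cont_integrable (c1.norm.pow n)
        have i2 : Integrable (fun x => (W (trigPoly (F.filter (· ∈ Γ)) a x) *
            trigPoly (F.filter (¬ · ∈ Γ)) a x).re) :=
          torus_cont_integrable (Complex.continuous_re.comp cW)
        rw [integral_add i1 i2, hre, add_zero]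
    _ ≤ ∫ x, ‖trigPoly F a x‖ ^ n := by
        refine integral_mono (torus_cont_integrable ((c1.norm.pow n).add (Complex.continuous_re.comp cW)))
          (torus_cont_integrable ((trigPoly_continuous F a).norm.pow n)) (fun x => ?_)
        rw [hsplit x]
        exact hineq _ _

theorem ineq_two (g h : ℂ) : ‖g‖ ^ 2 + ((2 * (starRingEnd ℂ) g) * h).re ≤ ‖g + h‖ ^ 2 := by
  rw [Complex.sq_norm, Complex.sq_norm, Complex.normSq_apply, Complex.normSq_apply]
  simp
  nlinarith [sq_nonneg h.re, sq_nonneg h.im]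

theorem ineq_four (g h : ℂ) : ‖g‖ ^ 4 + ((4 * (g * (starRingEnd ℂ) g * (starRingEnd ℂ) g)) * h).re ≤ ‖g + h‖ ^ 4 := by
  have h1 := ineq_two g h
  have e : ((4 * (g * (starRingEnd ℂ) g * (starRingEnd ℂ) g)) * h).re = 2 * ‖g‖ ^ 2 * ((2 * (starRingEnd ℂ) g) * h).re := by
    rw [Complex.mul_conj, Complex.sq_norm]
    have : (4 * ((Complex.normSq g : ℂ) * (starRingEnd ℂ) g)) * h = ((2 * Complex.normSq g : ℝ) : ℂ) * (2 * (starRingEnd ℂ) g * h) := by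
      push_cast; ring
    rw [this, Complex.re_ofReal_mul]
  rw [e]
  have e4 : ∀ z : ℂ, ‖z‖ ^ 4 = (‖z‖ ^ 2) ^ 2 := fun z => by ring
  rw [e4, e4]
  nlinarith [sq_nonneg (‖g + h‖ ^ 2 - ‖g‖ ^ 2), sq_nonneg ‖g‖]

theorem contractive_two {d : ℕ} {Γ : Set (Fin d → ℤ)} : IsContractiveHp d 2 Γ := by
  have := contractive_of_ineq (Γ := Γ) 2 two_ne_zero (fun g => 2 * (starRingEnd ℂ) g) (by fun_prop) ineq_two ?_
  · exact_mod_cast this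
  intro F hF a
  have := integral_sum_torusChar_zero ((F.filter (· ∈ Γ)) ×ˢ (F.filter (¬ · ∈ Γ)))
    (fun i => 2 * (starRingEnd ℂ) (a i.1) * a i.2) (fun i => i.2 - i.1) (by
      rintro ⟨α, β⟩ h
      simp only [Finset.mem_product, Finset.mem_filter] at h
      intro h0
      have : β = α := sub_eq_zero.1 h0
      exact h.2.2 (this ▸ h.1.2))
  rw [← this]
  congr 1
  ext x
  rw [Finset.sum_product]
  simp only [trigPoly, map_sum, map_mul, Finset.mul_sum, Finset.sum_mul, torusChar_sub]
  rw [Finset.sum_comm]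
  refine Finset.sum_congr rfl (fun α _ => Finset.sum_congr rfl (fun β _ => ?_))
  ring

theorem sum_four_mul {ι : Type*} (s t : Finset ι) (f g h : ι → ℂ) :
    4 * ((∑ i ∈ s, f i) * (∑ i ∈ s, g i) * (∑ i ∈ s, g i)) * (∑ i ∈ t, h i) =
      ∑ i ∈ s, ∑ j ∈ s, ∑ k ∈ s, ∑ l ∈ t, 4 * (f i * g j * g k) * h l := by
  simp only [← Finset.mul_sum, ← Finset.sum_mul]

theorem contractive_four {d : ℕ} {Γ : Set (Fin d → ℤ)} (hΓ : Comp1 Γ) : IsContractiveHp d 4 Γ := by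
  have := contractive_of_ineq (Γ := Γ) 4 four_ne_zero
    (fun g => 4 * (g * (starRingEnd ℂ) g * (starRingEnd ℂ) g)) (by fun_prop) ineq_four ?_
  · exact_mod_cast this
  intro F hF a
  have := integral_sum_torusChar_zero ((F.filter (· ∈ Γ)) ×ˢ (F.filter (· ∈ Γ)) ×ˢ (F.filter (· ∈ Γ)) ×ˢ (F.filter (¬ · ∈ Γ)))
    (fun i => 4 * a i.1 * (starRingEnd ℂ) (a i.2.1) * (starRingEnd ℂ) (a i.2.2.1) * a i.2.2.2)
    (fun i => i.1 - i.2.1 - i.2.2.1 + i.2.2.2) (by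
      rintro ⟨α, β, γ, δ⟩ h
      simp only [Finset.mem_product, Finset.mem_filter] at h
      intro h0
      have e : δ = β + γ - α := by
        have : δ - (β + γ - α) = 0 := by rw [← h0]; abel
        exact sub_eq_zero.1 this
      apply h.2.2.2.2
      rw [e]
      refine hΓ _ _ _ h.2.1.2 h.2.2.1.2 h.1.2 ?_
      rw [← e]
      exact hF h.2.2.2.1)
  rw [← this]
  congr 1
  ext x
  rw [Finset.sum_product]
  simp only [Finset.sum_product, trigPoly, map_sum, map_mul, torusChar_sub, torusChar_add]
  rw [sum_four_mul]
  refine Finset.sum_congr rfl (fun α _ => Finset.sum_congr rfl (fun β _ =>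
    Finset.sum_congr rfl (fun γ _ => Finset.sum_congr rfl (fun δ _ => ?_))))
  ring

theorem closed32_of_coset {d : ℕ} {Γ Λ : Set (Fin d → ℤ)} (hΛ : IsCoset Λ) (h : Γ = Λ ∩ NN d) :
    Closed32 Γ := by
  obtain ⟨x, H, rfl⟩ := hΛ
  intro a b c u v ha hb hc hu hv hn
  rw [h] at ha hb hc hu hv ⊢
  obtain ⟨⟨a, ha, rfl⟩, -⟩ := ha
  obtain ⟨⟨b, hb, rfl⟩, -⟩ := hb
  obtain ⟨⟨c, hc, rfl⟩, -⟩ := hc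
  obtain ⟨⟨u, hu, rfl⟩, -⟩ := hu
  obtain ⟨⟨v, hv, rfl⟩, -⟩ := hv
  refine ⟨⟨a + b + c - u - v, H.sub_mem (H.sub_mem (H.add_mem (H.add_mem ha hb) hc) hu) hv, ?_⟩, hn⟩
  simp only
  abel

theorem span_base_le {d : ℕ} {Γ : Set (Fin d → ℤ)} {g0 g1 : Fin d → ℤ} (h0 : g0 ∈ Γ) :
    Submodule.span ℤ ((· - g0) '' Γ) ≤ Submodule.span ℤ ((· - g1) '' Γ) := by
  rw [Submodule.span_le]
  rintro _ ⟨x, hx, rfl⟩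
  have : x - g0 = (x - g1) - (g0 - g1) := by abel
  simp only [this]
  exact Submodule.sub_mem _ (Submodule.subset_span ⟨x, hx, rfl⟩) (Submodule.subset_span ⟨g0, h0, rfl⟩)

theorem hasDim_of_base {d k : ℕ} {Γ : Set (Fin d → ℤ)} {g1 : Fin d → ℤ} (h1 : g1 ∈ Γ)
    (h : Module.finrank ℤ (Submodule.span ℤ ((· - g1) '' Γ)) = k) : HasDim Γ k := by
  intro g0 h0
  rw [← h, le_antisymm (span_base_le (g1 := g1) h0) (span_base_le (g1 := g0) h1)]

theorem hasDim_of_linInd {d k : ℕ} (g : Fin d → ℤ) (b : Fin k → Fin d → ℤ)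
    (hb : LinearIndependent ℤ b) : HasDim (insert g (Set.range (fun i => g + b i))) k := by
  refine hasDim_of_base (g1 := g) (Set.mem_insert _ _) ?_
  have e : (· - g) '' (insert g (Set.range (fun i => g + b i))) = insert 0 (Set.range b) := by
    rw [Set.image_insert_eq, ← Set.range_comp]
    simp only [sub_self]
    congr 2
    funext i
    simp
  rw [e, Submodule.span_insert_zero, finrank_span_eq_card hb, Fintype.card_fin]

theorem not_prop_of_example {d k : ℕ} (Γ : Set (Fin d → ℤ)) (hne : Γ.Nonempty) (hsub : Γ ⊆ NN d)
    (hdim : HasDim Γ k) (hc : Comp1 Γ) (hn : ¬ Closed32 Γ) :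
    ¬ ContractiveRestrictionProperty d 2 k ∧ ¬ ContractiveRestrictionProperty d 4 k := by
  constructor
  · intro h
    obtain ⟨Λ, h1, h2⟩ := h Γ hne hsub hdim contractive_two
    exact hn (closed32_of_coset h1 h2)
  · intro h
    obtain ⟨Λ, h1, h2⟩ := h Γ hne hsub hdim (contractive_four hc)
    exact hn (closed32_of_coset h1 h2)

def vec3 (n : ℕ) (a b c : ℤ) : Fin (n + 3) → ℤ := Fin.cons a (Fin.cons b (Fin.cons c 0))

theorem vec3_0 (n : ℕ) (a b c : ℤ) : vec3 n a b c 0 = a := rfl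
theorem vec3_1 (n : ℕ) (a b c : ℤ) : vec3 n a b c 1 = b := rfl
theorem vec3_2 (n : ℕ) (a b c : ℤ) : vec3 n a b c 2 = c := rfl

theorem vec3_add (n : ℕ) (a b c a' b' c' : ℤ) : vec3 n a b c + vec3 n a' b' c' = vec3 n (a + a') (b + b') (c + c') := by
  funext i
  simp only [Pi.add_apply]
  refine Fin.cases rfl (fun i => Fin.cases rfl (fun i => Fin.cases rfl (fun i => ?_) i) i) i
  simp [vec3]

theorem vec3_sub (n : ℕ) (a b c a' b' c' : ℤ) : vec3 n a b c - vec3 n a' b' c' = vec3 n (a - a') (b - b') (c - c') := by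
  funext i
  simp only [Pi.sub_apply]
  refine Fin.cases rfl (fun i => Fin.cases rfl (fun i => Fin.cases rfl (fun i => ?_) i) i) i
  simp [vec3]

theorem vec3_mem (n : ℕ) (a b c : ℤ) : vec3 n a b c ∈ NN (n + 3) ↔ 0 ≤ a ∧ 0 ≤ b ∧ 0 ≤ c := by
  constructor
  · intro h
    exact ⟨h 0, h 1, h 2⟩
  · rintro ⟨ha, hb, hc⟩ i
    refine Fin.cases ha (fun i => Fin.cases hb (fun i => Fin.cases hc (fun i => ?_) i) i) i
    simp [vec3]

theorem vec3_inj (n : ℕ) (a b c a' b' c' : ℤ) : vec3 n a b c = vec3 n a' b' c' ↔ a = a' ∧ b = b' ∧ c = c' := by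
  constructor
  · intro h
    exact ⟨congrFun h 0, congrFun h 1, congrFun h 2⟩
  · rintro ⟨rfl, rfl, rfl⟩; rfl

theorem example_dim2 (n : ℕ) :
    ¬ ContractiveRestrictionProperty (n + 3) 2 2 ∧ ¬ ContractiveRestrictionProperty (n + 3) 4 2 := by
  have hmem : ∀ x, x ∈ ({vec3 n 3 0 0, vec3 n 0 3 0, vec3 n 1 1 1} : Set (Fin (n + 3) → ℤ)) ↔
    x = vec3 n 3 0 0 ∨ x = vec3 n 0 3 0 ∨ x = vec3 n 1 1 1 := by
    intro x; simp
  refine not_prop_of_example {vec3 n 3 0 0, vec3 n 0 3 0, vec3 n 1 1 1} ⟨vec3 n 3 0 0, by simp⟩ ?_ ?_ ?_ ?_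
  · intro x hx
    rw [hmem] at hx
    rcases hx with rfl | rfl | rfl <;> rw [vec3_mem] <;> omega
  · have hb : LinearIndependent ℤ ![vec3 n (-3) 3 0, vec3 n (-2) 1 1] := by
      rw [LinearIndependent.pair_iff]
      intro s t h
      have h0 := congrFun h 1
      have h1 := congrFun h 2
      simp [vec3_1, vec3_2] at h0 h1
      omega
    have := hasDim_of_linInd (vec3 n 3 0 0) _ hb
    convert this using 1
    ext x
    simp only [Set.mem_insert_iff, Set.mem_range, Fin.exists_fin_two, Set.mem_singleton_iff]
    simp [vec3_add, eq_comm]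
  · intro a b c ha hb hc hn
    rw [hmem] at ha hb hc ⊢
    rcases ha with rfl | rfl | rfl <;> rcases hb with rfl | rfl | rfl <;> rcases hc with rfl | rfl | rfl <;>
      simp only [vec3_add, vec3_sub, vec3_mem, vec3_inj] at hn ⊢ <;> omega
  · intro h
    have h1 := h (vec3 n 1 1 1) (vec3 n 1 1 1) (vec3 n 1 1 1) (vec3 n 3 0 0) (vec3 n 0 3 0)
      (by simp) (by simp) (by simp) (by simp) (by simp)
    rw [hmem] at h1
    simp only [vec3_add, vec3_sub, vec3_mem, vec3_inj] at h1
    omega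

theorem example_dim3 :
    ¬ ContractiveRestrictionProperty 3 2 3 ∧ ¬ ContractiveRestrictionProperty 3 4 3 := by
  have hmem : ∀ x, x ∈ ({vec3 0 1 1 1, vec3 0 4 0 0, vec3 0 0 4 0, vec3 0 0 0 4} : Set (Fin (0 + 3) → ℤ)) ↔
    x = vec3 0 1 1 1 ∨ x = vec3 0 4 0 0 ∨ x = vec3 0 0 4 0 ∨ x = vec3 0 0 0 4 := by
    intro x; simp
  refine not_prop_of_example (d := 0 + 3) {vec3 0 1 1 1, vec3 0 4 0 0, vec3 0 0 4 0, vec3 0 0 0 4}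
    ⟨vec3 0 4 0 0, by simp⟩ ?_ ?_ ?_ ?_
  · intro x hx
    rw [hmem] at hx
    rcases hx with rfl | rfl | rfl | rfl <;> rw [vec3_mem] <;> omega
  · have hb : LinearIndependent ℤ ![vec3 0 3 (-1) (-1), vec3 0 (-1) 3 (-1), vec3 0 (-1) (-1) 3] := by
      rw [Fintype.linearIndependent_iff]
      intro g h
      have h0 := congrFun h 0
      have h1 := congrFun h 1
      have h2 := congrFun h 2
      simp [Fin.sum_univ_three, vec3_0, vec3_1, vec3_2] at h0 h1 h2
      intro i
      fin_cases i <;> simp <;> omega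
    have := hasDim_of_linInd (vec3 0 1 1 1) _ hb
    convert this using 1
    ext x
    simp only [Set.mem_insert_iff, Set.mem_range, Fin.exists_fin_succ, Set.mem_singleton_iff]
    simp [vec3_add, eq_comm]
  · intro a b c ha hb hc hn
    rw [hmem] at ha hb hc ⊢
    rcases ha with rfl | rfl | rfl | rfl <;> rcases hb with rfl | rfl | rfl | rfl <;>
      rcases hc with rfl | rfl | rfl | rfl <;>
      simp only [vec3_add, vec3_sub, vec3_mem, vec3_inj] at hn ⊢ <;> omega
  · intro h
    have h1 := h (vec3 0 4 0 0) (vec3 0 0 4 0) (vec3 0 0 0 4) (vec3 0 1 1 1) (vec3 0 1 1 1)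
      (by simp) (by simp) (by simp) (by simp) (by simp)
    rw [hmem] at h1
    simp only [vec3_add, vec3_sub, vec3_mem, vec3_inj] at h1
    omega

theorem contractive_test {d : ℕ} {p : ℝ≥0∞} {Γ : Set (Fin d → ℤ)} (hsub : Γ ⊆ NN d)
    (hΓ : IsContractiveHp d p Γ) (S : Finset (Fin d → ℤ)) (hS : ↑S ⊆ Γ) (lam : Fin d → ℤ)
    (hl : lam ∈ NN d) (hlΓ : lam ∉ Γ) (a : (Fin d → ℤ) → ℂ) (c : ℂ) :
    eLpNorm (trigPoly S a) p volume ≤ eLpNorm (fun x => trigPoly S a x + c * torusChar lam x) p volume := by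
  have hlS : lam ∉ S := fun h => hlΓ (hS h)
  have h := hΓ (insert lam S) (by
    intro x hx
    rw [Finset.mem_coe, Finset.mem_insert] at hx
    rcases hx with rfl | hx
    · exact hl
    · exact hsub (hS hx)) (Function.update a lam c)
  have e1 : (insert lam S).filter (· ∈ Γ) = S := by
    rw [Finset.filter_insert, if_neg hlΓ, Finset.filter_true_of_mem (fun x hx => hS hx)]
  have e2 : trigPoly S (Function.update a lam c) = trigPoly S a := by
    funext x
    unfold trigPoly
    refine Finset.sum_congr rfl (fun α hα => ?_)
    rw [Function.update_of_ne]
    rintro rfl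
    exact hlS hα
  have e3 : trigPoly (insert lam S) (Function.update a lam c) = fun x => trigPoly S a x + c * torusChar lam x := by
    funext x
    rw [← e2]
    unfold trigPoly
    rw [Finset.sum_insert hlS, Function.update_self, add_comm]
  rw [e1, e2, e3] at h
  exact h

theorem chars_aligned {d : ℕ} (S : Finset (Fin d → ℤ)) (hS : S.Nonempty) (x : Torus d)
    (h : (S.card : ℝ) ≤ ‖trigPoly S (fun _ => 1) x‖) :
    ∃ ω : ℂ, ‖ω‖ = 1 ∧ (∀ α ∈ S, torusChar α x = ω) := by
  have hN : (0 : ℝ) < S.card := by exact_mod_cast hS.card_pos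
  set f := trigPoly S (fun _ => 1) x with hf
  have hf' : f = ∑ α ∈ S, torusChar α x := by simp [hf, trigPoly]
  have hf0 : f ≠ 0 := by
    intro h0
    rw [h0, norm_zero] at h
    linarith
  have hle : ∀ α ∈ S, ((starRingEnd ℂ) f * torusChar α x).re ≤ ‖f‖ := by
    intro α _
    refine (Complex.re_le_norm _).trans ?_
    rw [norm_mul, torusChar_norm, mul_one, Complex.norm_conj]
  have hsum : ∑ α ∈ S, ((starRingEnd ℂ) f * torusChar α x).re = ‖f‖ ^ 2 := by
    rw [← Complex.re_sum, ← Finset.mul_sum, ← hf', mul_comm, Complex.mul_conj, Complex.ofReal_re,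
      Complex.sq_norm]
  have heq : ∑ α ∈ S, ((starRingEnd ℂ) f * torusChar α x).re = ∑ α ∈ S, ‖f‖ := by
    apply le_antisymm (Finset.sum_le_sum hle)
    rw [hsum, Finset.sum_const, nsmul_eq_mul, pow_two]
    exact mul_le_mul_of_nonneg_right h (norm_nonneg _)
  have hall := (Finset.sum_eq_sum_iff_of_le hle).1 heq
  refine ⟨f / ‖f‖, ?_, ?_⟩
  · rw [norm_div, Complex.norm_real, norm_norm, div_self (norm_ne_zero_iff.2 hf0)]
  · intro α hα
    have h1 := hall α hα
    have hn : ‖(starRingEnd ℂ) f * torusChar α x‖ = ‖f‖ := by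
      rw [norm_mul, torusChar_norm, mul_one, Complex.norm_conj]
    have h2 : (starRingEnd ℂ) f * torusChar α x = (‖f‖ : ℂ) := by
      apply Complex.ext
      · simpa using h1
      · have := Complex.sq_norm ((starRingEnd ℂ) f * torusChar α x)
        rw [hn, Complex.normSq_apply, h1] at this
        simp only [Complex.ofReal_im]
        nlinarith
    have hnf : (‖f‖ : ℂ) ≠ 0 := by exact_mod_cast norm_ne_zero_iff.2 hf0
    have h3 : f * (starRingEnd ℂ) f = (‖f‖ : ℂ) ^ 2 := by
      rw [Complex.mul_conj, Complex.normSq_eq_norm_sq]; push_cast; rfl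
    rw [eq_div_iff hnf]
    have : (‖f‖ : ℂ) * (torusChar α x * ‖f‖) = ‖f‖ * f := by
      calc (‖f‖ : ℂ) * (torusChar α x * ‖f‖) = (‖f‖ : ℂ) ^ 2 * torusChar α x := by ring
        _ = f * ((starRingEnd ℂ) f * torusChar α x) := by rw [← h3]; ring
        _ = _ := by rw [h2]; ring
    exact mul_left_cancel₀ hnf this

theorem closed32_top {d : ℕ} {Γ : Set (Fin d → ℤ)} (hsub : Γ ⊆ NN d)
    (hΓ : IsContractiveHp d ⊤ Γ) : Closed32 Γ := by
  intro a b c u v ha hb hc hu hv hl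
  by_contra hlΓ
  set lam := a + b + c - u - v with hlam
  set S : Finset (Fin d → ℤ) := {a, b, c, u, v} with hS
  have hSΓ : ↑S ⊆ Γ := by
    intro x hx
    simp [hS] at hx
    rcases hx with rfl | rfl | rfl | rfl | rfl <;> assumption
  have hne : S.Nonempty := ⟨a, by simp [hS]⟩
  have hN : (1 : ℝ) ≤ S.card := by exact_mod_cast hne.card_pos
  set N : ℝ := (S.card : ℝ) with hNdef
  set f := trigPoly S (fun _ => 1) with hf
  have hfc : Continuous f := trigPoly_continuous _ _
  have hfN : ∀ x, ‖f x‖ ≤ N := by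
    intro x
    rw [hf, trigPoly]
    refine (norm_sum_le _ _).trans ?_
    simp [torusChar_norm, hNdef]
  set φ : Torus d → ℝ := fun x => ((starRingEnd ℂ) (f x) * torusChar lam x).re with hφ
  have hφc : Continuous φ :=
    Complex.continuous_re.comp ((Complex.continuous_conj.comp hfc).mul (torusChar_continuous lam))
  have key : ∀ x, N ≤ ‖f x‖ → φ x = N := by
    intro x hx
    obtain ⟨ω, hω, hall⟩ := chars_aligned S hne x hx
    have hωω : ω * (starRingEnd ℂ) ω = 1 := by
      rw [Complex.mul_conj, Complex.normSq_eq_norm_sq, hω]; simp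
    have hlω : torusChar lam x = ω := by
      rw [hlam, torusChar_sub, torusChar_sub, torusChar_add, torusChar_add, hall a (by simp [hS]),
        hall b (by simp [hS]), hall c (by simp [hS]), hall u (by simp [hS]), hall v (by simp [hS])]
      calc ω * ω * ω * (starRingEnd ℂ) ω * (starRingEnd ℂ) ω
          = ω * (ω * (starRingEnd ℂ) ω) * (ω * (starRingEnd ℂ) ω) := by ring
        _ = ω := by rw [hωω]; ring
    have hfω : f x = N * ω := by
      rw [hf, trigPoly, Finset.sum_congr rfl (fun α hα => by rw [hall α hα])]
      simp [hNdef]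
    rw [hφ]
    simp only [hlω, hfω, map_mul, Complex.conj_ofReal]
    rw [mul_assoc, mul_comm _ ω, hωω]
    simp
  set K : Set (Torus d) := {x | φ x ≤ 1 / 2} with hK
  have hKc : IsCompact K := (isClosed_le hφc continuous_const).isCompact
  obtain ⟨δ, hδ, hδK⟩ := hKc.exists_forall_le' (f := fun x => N - ‖f x‖) (a := 0)
    (continuous_const.sub hfc.norm).continuousOn (by
      intro x hx
      rcases lt_or_ge ‖f x‖ N with h | h
      · exact sub_pos.2 h
      · exfalso
        have := key x h
        have hx' : φ x ≤ 1 / 2 := hx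
        linarith)
  set ε : ℝ := min (δ / 2) (1 / 2) with hε
  have hε0 : 0 < ε := by rw [hε]; positivity
  have hε1 : ε ≤ δ / 2 := min_le_left _ _
  have hε2 : ε ≤ 1 / 2 := min_le_right _ _
  set M : ℝ := max (N - δ / 2) (Real.sqrt (N ^ 2 - ε + ε ^ 2)) with hM
  have hMN : M < N := by
    rw [hM, max_lt_iff]
    refine ⟨by linarith, ?_⟩
    rw [Real.sqrt_lt' (by linarith)]
    nlinarith
  have hgM : ∀ x, ‖f x + (-(ε : ℂ)) * torusChar lam x‖ ≤ M := by
    intro x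
    by_cases hx : x ∈ K
    · refine le_trans ?_ (le_max_left _ _)
      have h1 := hδK x hx
      refine (norm_add_le _ _).trans ?_
      rw [norm_mul, torusChar_norm, norm_neg, Complex.norm_real, Real.norm_of_nonneg hε0.le]
      linarith
    · refine le_trans ?_ (le_max_right _ _)
      apply Real.le_sqrt_of_sq_le
      have hx' : 1 / 2 < φ x := not_le.1 hx
      have e : ‖f x + (-(ε : ℂ)) * torusChar lam x‖ ^ 2 = ‖f x‖ ^ 2 - 2 * ε * φ x + ε ^ 2 := by
        have ht : Complex.normSq (torusChar lam x) = 1 := by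
          rw [Complex.normSq_eq_norm_sq, torusChar_norm]; norm_num
        rw [Complex.normSq_apply] at ht
        rw [Complex.sq_norm, Complex.sq_norm, Complex.normSq_apply, Complex.normSq_apply]
        simp [hφ]
        linear_combination ε ^ 2 * ht
      rw [e]
      nlinarith [hfN x, norm_nonneg (f x)]
  have hM0 : 0 ≤ M := le_trans (Real.sqrt_nonneg _) (le_max_right _ _)
  have h1 := contractive_test hsub hΓ S hSΓ lam hl hlΓ (fun _ => 1) (-(ε : ℂ))
  have h2 : eLpNorm (fun x => f x + (-(ε : ℂ)) * torusChar lam x) ⊤ volume ≤ ENNReal.ofReal M := by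
    rw [eLpNorm_exponent_top]
    exact eLpNormEssSup_le_of_ae_bound (Filter.Eventually.of_forall hgM)
  have h3 := h1.trans h2
  rw [eLpNorm_exponent_top] at h3
  have h4 : ∀ᵐ x : Torus d, ‖f x‖ ≤ M := by
    filter_upwards [ae_le_eLpNormEssSup (f := f) (μ := volume)] with x hx
    have := hx.trans h3
    rw [← ofReal_norm_eq_enorm, ENNReal.ofReal_le_ofReal_iff hM0] at this
    exact this
  have h5 : {x | M < ‖f x‖} = (∅ : Set (Torus d)) := by
    rw [← (isOpen_lt continuous_const hfc.norm).measure_eq_zero_iff (μ := volume)]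
    rw [ae_iff] at h4
    simpa only [not_le] using h4
  have h6 : (0 : Torus d) ∈ {x | M < ‖f x‖} := by
    show M < ‖f 0‖
    have : f 0 = N := by
      rw [hf, trigPoly]
      simp [torusChar_at_zero, hNdef]
    rw [this, Complex.norm_real, Real.norm_of_nonneg (by linarith)]
    exact hMN
  rw [h5] at h6
  exact h6

theorem binom_hasSum (q : ℝ) (u : ℂ) (hu : ‖u‖ < 1) :
    HasSum (fun n : ℕ => ((Ring.choose q n : ℝ) : ℂ) * u ^ n) ((1 + u) ^ (q : ℂ)) := by
  have h := (Complex.one_add_cpow_hasFPowerSeriesOnBall_zero (a := (q : ℂ))).hasSum (y := u) (by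
    rw [← ENNReal.ofReal_one, Metric.eball_ofReal]
    simpa using hu)
  simp only [zero_add] at h
  have e : (fun n : ℕ => ((Ring.choose q n : ℝ) : ℂ) * u ^ n) =
      fun n => (binomialSeries ℂ (q : ℂ) n) (fun _ => u) := by
    funext n
    rw [binomialSeries_apply, ← Complex.ofReal_choose]
    simp
  rw [e]
  exact h

theorem binom_summable (q r : ℝ) (hr0 : 0 ≤ r) (hr : r < 1) :
    Summable (fun n : ℕ => |Ring.choose q n| * r ^ n) := by
  have h := (binom_hasSum q (r : ℂ) (by rw [Complex.norm_real, Real.norm_of_nonneg hr0]; exact hr)).summable.norm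
  convert h using 2 with n
  rw [norm_mul, Complex.norm_real, norm_pow, Complex.norm_real, Real.norm_of_nonneg hr0, Real.norm_eq_abs]

theorem binom_succ (q : ℝ) (n : ℕ) : ((n : ℝ) + 1) * Ring.choose q (n + 1) = q * Ring.choose (q - 1) n := by
  have h := Ring.choose_smul_choose q (n := n + 1) (k := 1) (by omega)
  rw [Ring.choose_one_right] at h
  simpa using h

theorem binom_prod_nonneg (q : ℝ) (hq : 0 ≤ q) (n : ℕ) : 0 ≤ Ring.choose q (n + 1) * Ring.choose (q - 1) n := by
  have h := binom_succ q n
  have h1 : (0 : ℝ) < (n : ℝ) + 1 := by positivity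
  have h2 : ((n : ℝ) + 1) * (Ring.choose q (n + 1) * Ring.choose (q - 1) n) = q * Ring.choose (q - 1) n ^ 2 := by
    rw [← mul_assoc, h]; ring
  have h3 : 0 ≤ q * Ring.choose (q - 1) n ^ 2 := by positivity
  rw [← h2] at h3
  exact nonneg_of_mul_nonneg_right h3 h1

theorem binom_prod_ne (q : ℝ) (h0 : q ≠ 0) (h1 : q ≠ 1) (h2 : q ≠ 2) :
    Ring.choose q 3 * Ring.choose (q - 1) 2 ≠ 0 := by
  have e1 := binom_succ q 2
  have e2 := binom_succ (q - 1) 1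
  rw [Ring.choose_one_right] at e2
  norm_num at e1 e2
  have n2 : Ring.choose (q - 1) 2 ≠ 0 := by
    intro h
    rw [h] at e2
    have : (q - 1) * (q - 1 - 1) ≠ 0 :=
      mul_ne_zero (sub_ne_zero.2 h1) (by intro h; apply h2; linarith)
    apply this
    linarith
  refine mul_ne_zero ?_ n2
  intro h
  rw [h] at e1
  have := mul_ne_zero h0 n2
  apply this
  linarith

theorem hasSum_torus_integral {d : ℕ} {ι : Type*} [Countable ι] (F : ι → Torus d → ℂ) (b : ι → ℝ) (G : Torus d → ℂ)
    (hF : ∀ i, Continuous (F i)) (hb : ∀ i x, ‖F i x‖ ≤ b i) (hs : Summable b)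
    (hG : ∀ x, HasSum (fun i => F i x) (G x)) :
    HasSum (fun i => ∫ x, F i x) (∫ x, G x) := by
  have h := hasSum_integral_of_summable_integral_norm (μ := (volume : Measure (Torus d))) (F := F)
    (fun i => torus_cont_integrable (hF i)) (by
      refine Summable.of_nonneg_of_le (fun i => integral_nonneg (fun x => norm_nonneg _)) (fun i => ?_) hs
      have := integral_mono (μ := (volume : Measure (Torus d))) (torus_cont_integrable (hF i).norm)
        (integrable_const (b i)) (fun x => hb i x)
      simpa using this)
  simpa only [(hG _).tsum_eq] using h

theorem cpow_identity (q : ℝ) (h : ℂ) (h0 : h ≠ 0) :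
    (((Complex.normSq h) ^ (q - 1) : ℝ) : ℂ) * (starRingEnd ℂ) h =
      (starRingEnd ℂ) (h ^ (q : ℂ)) * h ^ (((q - 1 : ℝ)) : ℂ) := by
  have e : h ^ (q : ℂ) = h ^ (((q - 1 : ℝ)) : ℂ) * h := by
    rw [Complex.ofReal_sub, Complex.ofReal_one, Complex.cpow_sub _ _ h0, Complex.cpow_one]
    field_simp
  rw [e, map_mul]
  have e2 : (((Complex.normSq h) ^ (q - 1) : ℝ) : ℂ) = h ^ (((q - 1 : ℝ)) : ℂ) * (starRingEnd ℂ) (h ^ (((q - 1 : ℝ)) : ℂ)) := by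
    rw [Complex.mul_conj, Complex.normSq_eq_norm_sq, Complex.normSq_eq_norm_sq, Complex.norm_cpow_real,
      ← Real.rpow_natCast, ← Real.rpow_natCast, ← Real.rpow_mul (norm_nonneg _),
      ← Real.rpow_mul (norm_nonneg _), mul_comm]
  rw [e2]
  ring

/-- Pointwise double expansion. -/
theorem double_hasSum (q : ℝ) (u : ℂ) (hu : ‖u‖ < 1) :
    HasSum (fun n : ℕ × ℕ => (((Ring.choose q n.1 * Ring.choose (q - 1) n.2 : ℝ)) : ℂ) *
      ((starRingEnd ℂ) u ^ n.1 * u ^ n.2))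
      ((((Complex.normSq (1 + u)) ^ (q - 1) : ℝ) : ℂ) * (starRingEnd ℂ) (1 + u)) := by
  have h0 : 1 + u ≠ 0 := by
    intro h
    have : u = -1 := by linear_combination h
    rw [this] at hu
    simp at hu
  rw [cpow_identity q _ h0]
  have h1 := binom_hasSum q u hu
  have h1' := h1.map (starRingEnd ℂ) Complex.continuous_conj
  have h2 := binom_hasSum (q - 1) u hu
  have hs := summable_mul_of_summable_norm h1'.summable.norm h2.summable.norm
  have h3 := h1'.mul h2 hs
  have e : (fun n : ℕ × ℕ => (((Ring.choose q n.1 * Ring.choose (q - 1) n.2 : ℝ)) : ℂ) *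
      ((starRingEnd ℂ) u ^ n.1 * u ^ n.2)) = fun n : ℕ × ℕ =>
      ((⇑(starRingEnd ℂ) ∘ fun n : ℕ => ((Ring.choose q n : ℝ) : ℂ) * u ^ n) n.1) *
        (((Ring.choose (q - 1) n.2 : ℝ) : ℂ) * u ^ n.2) := by
    funext n
    simp only [Function.comp_apply, map_mul, map_pow, Complex.conj_ofReal, Complex.ofReal_mul]
    ring
  rw [e]
  exact h3

theorem double_summable (q r : ℝ) (hr0 : 0 ≤ r) (hr : r < 1) :
    Summable (fun n : ℕ × ℕ => |Ring.choose q n.1 * Ring.choose (q - 1) n.2| * (r ^ n.1 * r ^ n.2)) := by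
  have := (binom_summable q r hr0 hr).mul_of_nonneg (binom_summable (q - 1) r hr0 hr)
    (fun n => by positivity) (fun n => by positivity)
  convert this using 2 with n
  rw [abs_mul]
  ring

theorem torusChar_sum {d : ℕ} {ι : Type*} (s : Finset ι) (e : ι → Fin d → ℤ) (x : Torus d) :
    torusChar (∑ i ∈ s, e i) x = ∏ i ∈ s, torusChar (e i) x := by
  induction s using Finset.induction_on with
  | empty => simp [torusChar_zero]
  | insert i s hi ih => rw [Finset.sum_insert hi, Finset.prod_insert hi, torusChar_add, ih]

theorem sum_torusChar_pow {d : ℕ} (S : Finset (Fin d → ℤ)) (e : (Fin d → ℤ) → Fin d → ℤ) (b : ℕ) (x : Torus d) :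
    (∑ s ∈ S, torusChar (e s) x) ^ b =
      ∑ g ∈ Fintype.piFinset (fun _ : Fin b => S), torusChar (∑ j, e (g j)) x := by
  have h := Finset.prod_univ_sum (fun _ : Fin b => S) (fun _ s => torusChar (e s) x)
  rw [Finset.prod_const, Finset.card_univ, Fintype.card_fin] at h
  rw [h]
  exact Finset.sum_congr rfl (fun g _ => (torusChar_sum _ _ _).symm)

def wfun {d : ℕ} (S : Finset (Fin d → ℤ)) (γ : Fin d → ℤ) (x : Torus d) : ℂ :=
  ∑ s ∈ S, torusChar (s - γ) x

theorem wfun_continuous {d : ℕ} (S : Finset (Fin d → ℤ)) (γ : Fin d → ℤ) : Continuous (wfun S γ) := by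
  unfold wfun
  exact continuous_finsetSum _ (fun s _ => torusChar_continuous _)

theorem wfun_conj {d : ℕ} (S : Finset (Fin d → ℤ)) (γ : Fin d → ℤ) (x : Torus d) :
    (starRingEnd ℂ) (wfun S γ x) = ∑ s ∈ S, torusChar (-(s - γ)) x := by
  simp only [wfun, map_sum, torusChar_neg]

theorem moment_eq {d : ℕ} (S : Finset (Fin d → ℤ)) (γ κ : Fin d → ℤ) (a b : ℕ) :
    ∫ x, (starRingEnd ℂ) (wfun S γ x) ^ a * wfun S γ x ^ b * torusChar κ x =
      ((((Fintype.piFinset (fun _ : Fin a => S)) ×ˢ (Fintype.piFinset (fun _ : Fin b => S))).filter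
        (fun i => (∑ j, -(i.1 j - γ)) + (∑ j, (i.2 j - γ)) + κ = 0)).card : ℂ) := by
  have e : ∀ x : Torus d, (starRingEnd ℂ) (wfun S γ x) ^ a * wfun S γ x ^ b * torusChar κ x =
      ∑ i ∈ (Fintype.piFinset (fun _ : Fin a => S)) ×ˢ (Fintype.piFinset (fun _ : Fin b => S)),
        torusChar ((∑ j, -(i.1 j - γ)) + (∑ j, (i.2 j - γ)) + κ) x := by
    intro x
    rw [wfun_conj, wfun, sum_torusChar_pow S (fun s => -(s - γ)) a x, sum_torusChar_pow S (fun s => s - γ) b x,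
      Finset.sum_mul_sum, Finset.sum_mul, Finset.sum_product]
    refine Finset.sum_congr rfl (fun f _ => ?_)
    rw [Finset.sum_mul]
    refine Finset.sum_congr rfl (fun g _ => ?_)
    rw [torusChar_add, torusChar_add]
  simp only [e]
  rw [integral_finsetSum _ (fun i _ => torus_cont_integrable (torusChar_continuous _))]
  simp only [torusChar_integral]
  rw [Finset.sum_boole]

theorem first_variation {d : ℕ} (q : ℝ) (h k : Torus d → ℂ) (hh : Continuous h) (hk : Continuous k)
    (hh1 : ∀ x, 1 / 2 ≤ ‖h x‖) (hk1 : ∀ x, ‖k x‖ ≤ 1)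
    (hmin : ∀ t : ℝ, ∫ x, (Complex.normSq (h x)) ^ q ≤ ∫ x, (Complex.normSq (h x + t * k x)) ^ q) :
    ∫ x, 2 * ((starRingEnd ℂ) (h x) * k x).re * q * (Complex.normSq (h x)) ^ (q - 1) = 0 := by
  set F : ℝ → Torus d → ℝ := fun t x => (Complex.normSq (h x + t * k x)) ^ q with hF
  set F' : ℝ → Torus d → ℝ := fun t x => 2 * ((starRingEnd ℂ) (h x + t * k x) * k x).re * q *
    (Complex.normSq (h x + t * k x)) ^ (q - 1) with hF'
  have hpos : ∀ t ∈ Set.Icc (-(1 / 4) : ℝ) (1 / 4), ∀ x, Complex.normSq (h x + t * k x) ≠ 0 := by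
    intro t ht x h0
    rw [Complex.normSq_eq_zero] at h0
    have h1 : h x = -(t * k x) := by linear_combination h0
    have h2 := hh1 x
    rw [h1, norm_neg, norm_mul, Complex.norm_real, Real.norm_eq_abs] at h2
    have h3 : |t| ≤ 1 / 4 := abs_le.2 ht
    have h4 := hk1 x
    nlinarith [abs_nonneg t, norm_nonneg (k x)]
  have hN : Continuous (fun z : ℝ × Torus d => Complex.normSq (h z.2 + z.1 * k z.2)) := by
    apply Complex.continuous_normSq.comp
    fun_prop
  have hF'c : ContinuousOn (fun z : ℝ × Torus d => F' z.1 z.2) (Set.Icc (-(1 / 4) : ℝ) (1 / 4) ×ˢ Set.univ) := by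
    have c1 : Continuous (fun z : ℝ × Torus d => 2 * ((starRingEnd ℂ) (h z.2 + z.1 * k z.2) * k z.2).re * q) := by
      fun_prop
    refine c1.continuousOn.mul ?_
    refine hN.continuousOn.rpow_const ?_
    rintro ⟨t, x⟩ hz
    exact Or.inl (hpos t hz.1 x)
  obtain ⟨C, hC⟩ := (isCompact_Icc.prod isCompact_univ).exists_bound_of_continuousOn hF'c
  have hsec : ∀ t ∈ Set.Icc (-(1 / 4) : ℝ) (1 / 4), Continuous (F t) := by
    intro t ht
    have : Continuous (fun x => Complex.normSq (h x + t * k x)) := hN.comp (by fun_prop : Continuous (fun x => (t, x)))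
    exact this.rpow_const (fun x => Or.inl (hpos t ht x))
  have h0 : (0 : ℝ) ∈ Set.Icc (-(1 / 4) : ℝ) (1 / 4) := by constructor <;> norm_num
  have hnhds : Set.Icc (-(1 / 4) : ℝ) (1 / 4) ∈ nhds (0 : ℝ) := Icc_mem_nhds (by norm_num) (by norm_num)
  have hF'0 : Continuous (F' 0) := by
    rw [← continuousOn_univ]
    exact hF'c.comp (f := fun x => ((0 : ℝ), x)) (by fun_prop) (fun x _ => ⟨h0, trivial⟩)
  have key := hasDerivAt_integral_of_dominated_loc_of_deriv_le (μ := (volume : Measure (Torus d)))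
    (F := F) (F' := F') (x₀ := (0 : ℝ)) (s := Set.Icc (-(1 / 4) : ℝ) (1 / 4)) (bound := fun _ => C) hnhds
    (by
      filter_upwards [hnhds] with t ht
      exact (hsec t ht).aestronglyMeasurable)
    (torus_cont_integrable (hsec 0 h0)) hF'0.aestronglyMeasurable
    (Filter.Eventually.of_forall (fun x t ht => hC (t, x) ⟨ht, trivial⟩))
    (integrable_const C)
    (Filter.Eventually.of_forall (fun x t ht => by
      have e1 : HasDerivAt (fun t : ℝ => Complex.normSq (h x + t * k x))
          (2 * ((starRingEnd ℂ) (h x + t * k x) * k x).re) t := by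
        have a1 : HasDerivAt (fun t : ℝ => (h x).re + t * (k x).re) ((k x).re) t := by
          simpa using ((hasDerivAt_id t).mul_const (k x).re).const_add (h x).re
        have a2 : HasDerivAt (fun t : ℝ => (h x).im + t * (k x).im) ((k x).im) t := by
          simpa using ((hasDerivAt_id t).mul_const (k x).im).const_add (h x).im
        have a3 := (a1.mul a1).add (a2.mul a2)
        have a4 : HasDerivAt (fun t : ℝ => Complex.normSq (h x + t * k x)) _ t :=
          a3.congr_of_eventuallyEq (Filter.Eventually.of_forall (fun t => by
            simp [Complex.normSq_apply]))
        refine a4.congr_deriv ?_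
        simp
        ring
      exact e1.rpow_const (Or.inl (hpos t ht x))))
  have hloc : IsLocalMin (fun t => ∫ x, F t x) 0 := by
    refine Filter.Eventually.of_forall (fun t => ?_)
    simpa [hF] using hmin t
  have := hloc.hasDerivAt_eq_zero key.2
  simpa [hF'] using this

theorem first_variation_complex {d : ℕ} (q : ℝ) (hq : q ≠ 0) (h e : Torus d → ℂ) (hh : Continuous h) (he : Continuous e)
    (hh1 : ∀ x, 1 / 2 ≤ ‖h x‖) (he1 : ∀ x, ‖e x‖ ≤ 1)
    (hmin : ∀ c : ℂ, ∫ x, (Complex.normSq (h x)) ^ q ≤ ∫ x, (Complex.normSq (h x + c * e x)) ^ q) :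
    ∫ x, (((Complex.normSq (h x)) ^ (q - 1) : ℝ) : ℂ) * (starRingEnd ℂ) (h x) * e x = 0 := by
  set G : Torus d → ℂ := fun x => (((Complex.normSq (h x)) ^ (q - 1) : ℝ) : ℂ) * (starRingEnd ℂ) (h x) * e x with hG
  have hGc : Continuous G := by
    refine ((Complex.continuous_ofReal.comp ((Complex.continuous_normSq.comp hh).rpow_const (fun x => Or.inl ?_))).mul
      (Complex.continuous_conj.comp hh)).mul he
    have := hh1 x
    simp only [Function.comp_apply, ne_eq, Complex.normSq_eq_zero]
    intro h0
    rw [h0, norm_zero] at this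
    norm_num at this
  have hc : ∀ c : ℂ, ‖c‖ ≤ 1 → (c * ∫ x, G x).re = 0 := by
    intro c hc
    have h1 := first_variation q h (fun x => c * e x) hh (continuous_const.mul he) hh1
      (fun x => by
        rw [norm_mul]
        exact mul_le_one₀ hc (norm_nonneg _) (he1 x))
      (fun t => by
        have := hmin (t * c)
        simpa only [mul_assoc] using this)
    have h2 : ∀ x, 2 * ((starRingEnd ℂ) (h x) * (c * e x)).re * q * (Complex.normSq (h x)) ^ (q - 1) =
        (2 * q) * (c * G x).re := by
      intro x
      have : c * G x = (((Complex.normSq (h x)) ^ (q - 1) : ℝ) : ℂ) * ((starRingEnd ℂ) (h x) * (c * e x)) := by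
        simp only [hG]; ring
      rw [this, Complex.re_ofReal_mul]
      ring
    simp only [h2] at h1
    rw [integral_const_mul] at h1
    have h3 : ∫ x, (c * G x).re = 0 := by
      rcases mul_eq_zero.1 h1 with h | h
      · exfalso; apply hq; linarith
      · exact h
    have hi : Integrable (fun x => c * G x) := torus_cont_integrable (continuous_const.mul hGc)
    have h4 := integral_re hi
    rw [integral_const_mul] at h4
    rw [← h3]
    exact h4.symm
  have r1 := hc 1 (by simp)
  have r2 := hc Complex.I (by simp)
  apply Complex.ext
  · simpa using r1
  · simpa using r2

theorem normSq_rpow_half (P : ℝ) (z : ℂ) : (Complex.normSq z) ^ (P / 2) = ‖z‖ ^ P := by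
  rw [Complex.normSq_eq_norm_sq, ← Real.rpow_natCast, ← Real.rpow_mul (norm_nonneg _)]
  congr 1
  push_cast
  ring

theorem wfun_norm_le {d : ℕ} (S : Finset (Fin d → ℤ)) (γ : Fin d → ℤ) (x : Torus d) :
    ‖wfun S γ x‖ ≤ S.card := by
  unfold wfun
  refine (norm_sum_le _ _).trans ?_
  simp [torusChar_norm]

theorem trigPoly_factor {d : ℕ} (S : Finset (Fin d → ℤ)) (γ : Fin d → ℤ) (hγ : γ ∈ S) (ζ : ℂ) (x : Torus d) :
    trigPoly S (fun s => (if s = γ then 1 else 0) + ζ) x = torusChar γ x * (1 + ζ * wfun S γ x) := by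
  unfold trigPoly wfun
  simp only [add_mul, Finset.sum_add_distrib, ite_mul, one_mul, zero_mul, Finset.sum_ite_eq', if_pos hγ]
  rw [mul_add, mul_one, Finset.mul_sum, Finset.mul_sum]
  congr 1
  refine Finset.sum_congr rfl (fun s _ => ?_)
  have : s = γ + (s - γ) := by abel
  conv_lhs => rw [this, torusChar_add]
  ring

theorem vanishing {d : ℕ} {p : ℝ≥0∞} (hp : 1 ≤ p) (hpt : p ≠ ⊤) {Γ : Set (Fin d → ℤ)} (hsub : Γ ⊆ NN d)
    (hΓ : IsContractiveHp d p Γ) (S : Finset (Fin d → ℤ)) (hS : ↑S ⊆ Γ) (γ : Fin d → ℤ) (hγ : γ ∈ S)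
    (lam : Fin d → ℤ) (hl : lam ∈ NN d) (hlΓ : lam ∉ Γ) (ζ : ℂ) (hζ : ‖ζ‖ * S.card ≤ 1 / 2) :
    ∫ x, (((Complex.normSq (1 + ζ * wfun S γ x)) ^ (p.toReal / 2 - 1) : ℝ) : ℂ) *
      (starRingEnd ℂ) (1 + ζ * wfun S γ x) * torusChar (lam - γ) x = 0 := by
  have hp0 : p ≠ 0 := by
    rintro rfl
    simp at hp
  have hq : p.toReal / 2 ≠ 0 := by
    have := ENNReal.toReal_pos hp0 hpt
    positivity
  refine first_variation_complex (p.toReal / 2) hq (fun x => 1 + ζ * wfun S γ x) (torusChar (lam - γ))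
    (continuous_const.add (continuous_const.mul (wfun_continuous S γ))) (torusChar_continuous _) ?_
    (fun x => (torusChar_norm _ _).le) ?_
  · intro x
    have h1 : ‖ζ * wfun S γ x‖ ≤ 1 / 2 := by
      rw [norm_mul]
      exact (mul_le_mul_of_nonneg_left (wfun_norm_le S γ x) (norm_nonneg _)).trans hζ
    have h2 := norm_sub_le (1 + ζ * wfun S γ x) (ζ * wfun S γ x)
    rw [add_sub_cancel_right, norm_one] at h2
    linarith
  · intro c
    have h1 := contractive_test hsub hΓ S hS lam hl hlΓ (fun s => (if s = γ then 1 else 0) + ζ) c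
    have hcc : Continuous (fun x => trigPoly S (fun s => (if s = γ then 1 else 0) + ζ) x + c * torusChar lam x) :=
      (trigPoly_continuous _ _).add (continuous_const.mul (torusChar_continuous _))
    rw [eLpNorm_le_iff_integral hp0 hpt hcc (trigPoly_continuous _ _)] at h1
    have e1 : ∀ x, ‖trigPoly S (fun s => (if s = γ then 1 else 0) + ζ) x‖ = ‖1 + ζ * wfun S γ x‖ := by
      intro x
      rw [trigPoly_factor S γ hγ, norm_mul, torusChar_norm, one_mul]
    have e2 : ∀ x, ‖trigPoly S (fun s => (if s = γ then 1 else 0) + ζ) x + c * torusChar lam x‖ =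
        ‖1 + ζ * wfun S γ x + c * torusChar (lam - γ) x‖ := by
      intro x
      have : lam = γ + (lam - γ) := by abel
      have h3 : torusChar lam x = torusChar γ x * torusChar (lam - γ) x := by
        rw [← torusChar_add, ← this]
      rw [trigPoly_factor S γ hγ, h3]
      have h4 : torusChar γ x * (1 + ζ * wfun S γ x) + c * (torusChar γ x * torusChar (lam - γ) x) =
        torusChar γ x * (1 + ζ * wfun S γ x + c * torusChar (lam - γ) x) := by ring
      rw [h4, norm_mul, torusChar_norm, one_mul]
    simp only [e1, e2] at h1
    simpa only [normSq_rpow_half] using h1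

theorem moment_series {d : ℕ} (q : ℝ) (S : Finset (Fin d → ℤ)) (γ κ : Fin d → ℤ) (ζ : ℂ)
    (hζ : ‖ζ‖ * S.card ≤ 1 / 2)
    (hJ : ∫ x, (((Complex.normSq (1 + ζ * wfun S γ x)) ^ (q - 1) : ℝ) : ℂ) *
      (starRingEnd ℂ) (1 + ζ * wfun S γ x) * torusChar κ x = 0) :
    HasSum (fun n : ℕ × ℕ => (((Ring.choose q n.1 * Ring.choose (q - 1) n.2 : ℝ)) : ℂ) *
      ((starRingEnd ℂ) ζ ^ n.1 * ζ ^ n.2) *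
      (∫ x, (starRingEnd ℂ) (wfun S γ x) ^ n.1 * wfun S γ x ^ n.2 * torusChar κ x)) 0 := by
  have hu : ∀ x, ‖ζ * wfun S γ x‖ ≤ 1 / 2 := by
    intro x
    rw [norm_mul]
    exact (mul_le_mul_of_nonneg_left (wfun_norm_le S γ x) (norm_nonneg _)).trans hζ
  have hw := wfun_continuous S γ
  have hκ := torusChar_continuous κ
  have h := hasSum_torus_integral
    (fun (n : ℕ × ℕ) x => (((Ring.choose q n.1 * Ring.choose (q - 1) n.2 : ℝ)) : ℂ) *
      ((starRingEnd ℂ) (ζ * wfun S γ x) ^ n.1 * (ζ * wfun S γ x) ^ n.2) * torusChar κ x)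
    (fun n => |Ring.choose q n.1 * Ring.choose (q - 1) n.2| * ((1 / 2) ^ n.1 * (1 / 2) ^ n.2))
    (fun x => (((Complex.normSq (1 + ζ * wfun S γ x)) ^ (q - 1) : ℝ) : ℂ) *
      (starRingEnd ℂ) (1 + ζ * wfun S γ x) * torusChar κ x)
    (fun n => by fun_prop)
    (fun n x => by
      rw [norm_mul, torusChar_norm, mul_one, norm_mul, Complex.norm_real, Real.norm_eq_abs, norm_mul, norm_pow,
        norm_pow, Complex.norm_conj]
      have := hu x
      gcongr)
    (double_summable q (1 / 2) (by norm_num) (by norm_num))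
    (fun x => (double_hasSum q _ (lt_of_le_of_lt (hu x) (by norm_num))).mul_right _)
  rw [hJ] at h
  have e : (fun n : ℕ × ℕ => (((Ring.choose q n.1 * Ring.choose (q - 1) n.2 : ℝ)) : ℂ) *
      ((starRingEnd ℂ) ζ ^ n.1 * ζ ^ n.2) *
      (∫ x, (starRingEnd ℂ) (wfun S γ x) ^ n.1 * wfun S γ x ^ n.2 * torusChar κ x)) =
      fun n : ℕ × ℕ => ∫ x, (((Ring.choose q n.1 * Ring.choose (q - 1) n.2 : ℝ)) : ℂ) *
      ((starRingEnd ℂ) (ζ * wfun S γ x) ^ n.1 * (ζ * wfun S γ x) ^ n.2) * torusChar κ x := by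
    funext n
    rw [← integral_const_mul]
    congr 1
    funext x
    rw [map_mul, mul_pow, mul_pow]
    ring
  rw [e]
  exact h

theorem averaging (C : ℕ × ℕ → ℝ) (r : ℝ) (hr : 0 < r)
    (hs : ∀ ζ : ℂ, ‖ζ‖ = r → HasSum (fun n : ℕ × ℕ => (C n : ℂ) * ((starRingEnd ℂ) ζ ^ n.1 * ζ ^ n.2)) 0)
    (hC : ∀ n, 0 ≤ C (n + 1, n)) (n : ℕ) : C (n + 1, n) = 0 := by
  have hs0 := (hs r (by rw [Complex.norm_real, Real.norm_of_nonneg hr.le])).summable.norm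
  set b : ℕ × ℕ → ℝ := fun n => ‖(C n : ℂ) * ((starRingEnd ℂ) (r : ℂ) ^ n.1 * (r : ℂ) ^ n.2)‖ with hb
  have e : ∀ (n : ℕ × ℕ) (x : Torus 1), (C n : ℂ) * ((starRingEnd ℂ) (r * torusChar (fun _ => 1) x) ^ n.1 *
      (r * torusChar (fun _ => 1) x) ^ n.2) * torusChar (fun _ => 1) x =
      ((C n * (r ^ n.1 * r ^ n.2) : ℝ) : ℂ) * torusChar (fun _ => (n.2 : ℤ) - n.1 + 1) x := by
    intro n x
    have hpow : ∀ m : ℕ, torusChar (d := 1) (fun _ => (m : ℤ)) x = torusChar (fun _ => 1) x ^ m := by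
      intro m
      induction m with
      | zero => exact torusChar_zero x
      | succ m ih =>
        rw [pow_succ, ← ih, ← torusChar_add]
        congr 1
    have h2 : torusChar (d := 1) (fun _ => (n.2 : ℤ) - n.1 + 1) x =
        torusChar (fun _ => 1) x ^ n.2 * (starRingEnd ℂ) (torusChar (fun _ => 1) x) ^ n.1 * torusChar (fun _ => 1) x := by
      rw [← map_pow, ← hpow, ← hpow, ← torusChar_sub, ← torusChar_add]
      congr 1
    rw [h2]
    push_cast
    rw [map_mul, Complex.conj_ofReal, mul_pow, mul_pow]
    ring
  have h := hasSum_torus_integral (d := 1)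
    (fun (n : ℕ × ℕ) x => ((C n * (r ^ n.1 * r ^ n.2) : ℝ) : ℂ) * torusChar (fun _ => (n.2 : ℤ) - n.1 + 1) x) b
    (fun _ => 0)
    (fun n => continuous_const.mul (torusChar_continuous _))
    (fun n x => by
      rw [norm_mul, torusChar_norm, mul_one, hb]
      apply le_of_eq
      push_cast
      rw [Complex.conj_ofReal])
    hs0
    (fun x => by
      have h1 := (hs (r * torusChar (fun _ => 1) x) (by
        rw [norm_mul, torusChar_norm, mul_one, Complex.norm_real, Real.norm_of_nonneg hr.le])).mul_right
          (torusChar (fun _ => 1) x)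
      rw [zero_mul] at h1
      simpa only [e] using h1)
  simp only [integral_const_mul, torusChar_integral, integral_zero] at h
  have e2 : (fun n : ℕ × ℕ => ((C n * (r ^ n.1 * r ^ n.2) : ℝ) : ℂ) *
      (if (fun _ : Fin 1 => (n.2 : ℤ) - n.1 + 1) = 0 then (1 : ℂ) else 0)) =
      fun n : ℕ × ℕ => ((if n.1 = n.2 + 1 then C n * (r ^ n.1 * r ^ n.2) else 0 : ℝ) : ℂ) := by
    funext n
    have : ((fun _ : Fin 1 => (n.2 : ℤ) - n.1 + 1) = 0) ↔ n.1 = n.2 + 1 := by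
      constructor
      · intro h
        have := congrFun h 0
        simp at this
        omega
      · intro h
        funext i
        simp [h]
    simp only [this]
    split_ifs <;> simp
  rw [e2] at h
  have h' : HasSum (fun n : ℕ × ℕ => (if n.1 = n.2 + 1 then C n * (r ^ n.1 * r ^ n.2) else 0 : ℝ)) 0 := by
    have := Complex.hasSum_re h
    simpa using this
  rw [hasSum_zero_iff_of_nonneg] at h'
  · have := congrFun h' (n + 1, n)
    simp only [if_true, Pi.zero_apply] at this
    rcases mul_eq_zero.1 this with h | h
    · exact h
    · exfalso
      have : 0 < r ^ (n + 1) * r ^ n := by positivity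
      linarith
  · intro m
    show (0 : ℝ) ≤ if m.1 = m.2 + 1 then C m * (r ^ m.1 * r ^ m.2) else 0
    split_ifs with hm
    · obtain ⟨m1, m2⟩ := m
      simp only at hm
      subst hm
      have := hC m2
      positivity
    · exact le_rfl

theorem closed32_finite {d : ℕ} {p : ℝ≥0∞} (hp : 1 ≤ p) (hpt : p ≠ ⊤) (h2 : p ≠ 2) (h4 : p ≠ 4)
    {Γ : Set (Fin d → ℤ)} (hsub : Γ ⊆ NN d) (hΓ : IsContractiveHp d p Γ) : Closed32 Γ := by
  intro a b c u v ha hb hc hu hv hl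
  by_contra hlΓ
  set lam := a + b + c - u - v with hlam
  set S : Finset (Fin d → ℤ) := {a, b, c, u, v} with hS
  have hSΓ : ↑S ⊆ Γ := by
    intro x hx
    simp [hS] at hx
    rcases hx with rfl | rfl | rfl | rfl | rfl <;> assumption
  have haS : a ∈ S := by simp [hS]
  have hN : (0 : ℝ) < S.card := by exact_mod_cast Finset.card_pos.2 ⟨a, haS⟩
  have hp0 : p ≠ 0 := by
    rintro rfl
    simp at hp
  have hpp := ENNReal.toReal_pos hp0 hpt
  set q := p.toReal / 2 with hq
  have q0 : q ≠ 0 := by positivity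
  have q1 : q ≠ 1 := by
    intro h
    apply h2
    have h' : p.toReal = 2 := by linarith
    rw [← ENNReal.ofReal_toReal hpt, h']
    simp
  have q2 : q ≠ 2 := by
    intro h
    apply h4
    have h' : p.toReal = 4 := by linarith
    rw [← ENNReal.ofReal_toReal hpt, h']
    simp
  set M : ℕ × ℕ → ℕ := fun n => (((Fintype.piFinset (fun _ : Fin n.1 => S)) ×ˢ
      (Fintype.piFinset (fun _ : Fin n.2 => S))).filter
        (fun i => (∑ j, -(i.1 j - a)) + (∑ j, (i.2 j - a)) + (lam - a) = 0)).card with hM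
  have hz := averaging (fun n => Ring.choose q n.1 * Ring.choose (q - 1) n.2 * M n) (1 / (2 * S.card))
    (by positivity)
    (fun ζ hζ => by
      have hζ' : ‖ζ‖ * S.card ≤ 1 / 2 := by
        rw [hζ]
        apply le_of_eq
        field_simp
      have h := moment_series q S a (lam - a) ζ hζ'
        (vanishing hp hpt hsub hΓ S hSΓ a haS lam hl hlΓ ζ hζ')
      simp only [moment_eq] at h
      convert h using 2 with n
      push_cast
      ring)
    (fun n => mul_nonneg (binom_prod_nonneg q (by positivity) n) (Nat.cast_nonneg _)) 2
  simp only at hz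
  rcases mul_eq_zero.1 hz with h | h
  · exact binom_prod_ne q q0 q1 q2 h
  · rw [Nat.cast_eq_zero, hM, Finset.card_eq_zero] at h
    have : ((![a, b, c], ![u, v]) : (Fin 3 → Fin d → ℤ) × (Fin 2 → Fin d → ℤ)) ∈
      (((Fintype.piFinset (fun _ : Fin (2 + 1) => S)) ×ˢ
      (Fintype.piFinset (fun _ : Fin 2 => S))).filter
        (fun i => (∑ j, -(i.1 j - a)) + (∑ j, (i.2 j - a)) + (lam - a) = 0)) := by
      rw [Finset.mem_filter, Finset.mem_product, Fintype.mem_piFinset, Fintype.mem_piFinset]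
      refine ⟨⟨fun i => ?_, fun i => ?_⟩, ?_⟩
      · fin_cases i <;> simp [hS]
      · fin_cases i <;> simp [hS]
      · have e3 : ∑ j : Fin (2 + 1), -((![a, b, c] : Fin 3 → Fin d → ℤ) j - a) =
            -(a - a) + -(b - a) + -(c - a) := Fin.sum_univ_three _
        have e4 : ∑ j : Fin 2, ((![u, v] : Fin 2 → Fin d → ℤ) j - a) = (u - a) + (v - a) := Fin.sum_univ_two _
        show ∑ j : Fin (2 + 1), -((![a, b, c] : Fin 3 → Fin d → ℤ) j - a) +
          ∑ j : Fin 2, ((![u, v] : Fin 2 → Fin d → ℤ) j - a) + (lam - a) = 0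
        rw [e3, e4, hlam]
        abel
    simp only at h
    rw [h] at this
    simp at this

theorem closed32_of_contractive {d : ℕ} {p : ℝ≥0∞} (hp : 1 ≤ p) (h2 : p ≠ 2) (h4 : p ≠ 4)
    {Γ : Set (Fin d → ℤ)} (hsub : Γ ⊆ NN d) (hΓ : IsContractiveHp d p Γ) : Closed32 Γ := by
  by_cases hpt : p = ⊤
  · subst hpt
    exact closed32_top hsub hΓ
  · exact closed32_finite hp hpt h2 h4 hsub hΓ

theorem main_aux (d k : ℕ) (h : (d = 3 ∧ k = 3) ∨ (3 ≤ d ∧ k = 2)) (p : ℝ≥0∞) (hp : 1 ≤ p) :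
    ContractiveRestrictionProperty d p k ↔ (p ≠ 2 ∧ p ≠ 4) := by
  constructor
  · intro hc
    have hex : ¬ ContractiveRestrictionProperty d 2 k ∧ ¬ ContractiveRestrictionProperty d 4 k := by
      rcases h with ⟨rfl, rfl⟩ | ⟨hd, rfl⟩
      · exact example_dim3
      · obtain ⟨n, rfl⟩ : ∃ n, d = n + 3 := ⟨d - 3, by omega⟩
        exact example_dim2 n
    constructor
    · rintro rfl
      exact hex.1 hc
    · rintro rfl
      exact hex.2 hc
  · rintro ⟨h2, h4⟩ Γ hne hsub hdim hΓ
    have hcl := closed32_of_contractive hp h2 h4 hsub hΓ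
    rcases h with ⟨rfl, rfl⟩ | ⟨hd, rfl⟩
    · exact coset_of_closed_dim3 Γ hne hsub hdim hcl
    · exact coset_of_closed_dim2 Γ hne hsub hdim hcl

/-- Theorem 2 (b): if `d = k = 3`, or `d ≥ 3` and `k = 2`, then `H^p(𝕋^d)` enjoys the
contractive restriction property of dimension `k` iff `p ∉ {2, 4}`. -/
theorem contractive_restriction_property_b (d k : ℕ) (hd : 1 ≤ d) (hk : 1 ≤ k)
    (hkd : k ≤ d) (h : (d = 3 ∧ k = 3) ∨ (3 ≤ d ∧ k = 2)) (p : ℝ≥0∞) (hp : 1 ≤ p) :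
    ContractiveRestrictionProperty d p k ↔ (p ≠ 2 ∧ p ≠ 4) :=
  main_aux d k h p hp

end
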